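/- Schur orthogonality on the unitary group: let N be a positive integer, λ a Young diagram with at most N rows, and V, W ∈ U(N). Then ∫_{U(N)} s_λ(U V U* W) dm_N(U) = s_λ(V)·s_λ(W) / d_λ, where d_λ = s_λ(1,…,1) = ∏_{1≤i<j≤N}(l_i − l_j)/∏_{i=1}^{N−1} i! with l_i = λ_i + N − i. -/

import Mathlib

/-- A semistandard Young tableau of shape `lam` (a Young diagram with at most `N` rows,
given as a nonincreasing function `Fin N → ℕ`), with entries in `Fin N` (representing
the integers `1, …, N`).  `entry i j` is the entry in row `i` and column `j` (0-indexed);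
rows are weakly increasing, columns are strictly increasing, and entries outside of the
shape are normalized to `0`. -/
structure SSYT (N : ℕ) (lam : Fin N → ℕ) where
  entry : Fin N → ℕ → Fin N
  rowWeak : ∀ (i : Fin N) (j1 j2 : ℕ), j1 ≤ j2 → j2 < lam i → entry i j1 ≤ entry i j2
  colStrict : ∀ (i1 i2 : Fin N), i1 < i2 → ∀ j : ℕ, j < lam i2 → entry i1 j < entry i2 j
  zeroOutside : ∀ (i : Fin N) (j : ℕ), lam i ≤ j → (entry i j : ℕ) = 0

/-- The content of a semistandard Young tableau: `content T k` is the number of cells of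
`T` whose entry equals `k`. -/
noncomputable def SSYT.content {N : ℕ} {lam : Fin N → ℕ} (T : SSYT N lam) (k : Fin N) : ℕ :=
  ∑ i : Fin N, ((Finset.range (lam i)).filter (fun j => T.entry i j = k)).card

/-- The Schur polynomial `s_lam (x 0, …, x (N-1))`, defined as the sum over all semistandard
Young tableaux `T` of shape `lam` with entries in `{1, …, N}` of the monomial
`∏ k, (x k) ^ (number of entries of T equal to k)`. -/
noncomputable def schur {R : Type*} [CommRing R] [TopologicalSpace R] (N : ℕ)
    (lam : Fin N → ℕ) (x : Fin N → R) : R :=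
  ∑' T : SSYT N lam, ∏ k : Fin N, x k ^ T.content k

/-- Matrices are endowed with the Borel sigma-algebra of their (entrywise) topology. -/
noncomputable instance matrixMeasurableSpace {m n α : Type*} [TopologicalSpace α] :
    MeasurableSpace (Matrix m n α) := borel _

open MeasureTheory

/-- The Schur polynomial of an `N × N` complex matrix: `s_λ(C)` is `s_λ` evaluated at the
`N` eigenvalues of `C` (the roots, with multiplicity, of its characteristic polynomial);
this is well defined since `s_λ` is symmetric. -/
noncomputable def schurMat (N : ℕ) (lam : Fin N → ℕ) (C : Matrix (Fin N) (Fin N) ℂ) : ℂ :=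
  schur N lam (fun i => C.charpoly.roots.toList.getD (i : ℕ) 0)

/-!
On polynomials in the entries of a matrix, `GL_N` acts by right translation, with Casimir element
`Ω`. A product `Δ` of powers of leading principal minors is a highest weight vector, hence an
eigenvector of `Ω`, and its weights are dominated by `λ`; two-sided translates and averages of `Δ`
inherit the eigenvalue and the dominance. If such a polynomial is moreover a class function on the
unitary group, its restriction to diagonal matrices is symmetric and `Ω` acts on it through its
radial part, which conjugation by the Vandermonde determinant turns into `∑ (xᵢ ∂ᵢ)²` plus a
constant. Comparing eigenvalues, the exponents `k` of its product with the Vandermonde determinant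
satisfy `∑ kᵢ² = ∑ lᵢ²`, and dominance leaves only the permutations of `l`. So the class function
is a multiple of the ratio of alternants `s_λ`.

Averaging `Δ` over conjugations gives a class function `f` with `f 1 = 1`, a multiple of `s_λ`. For
fixed `V`, the polynomial `M ↦ ∫ f (U V U⋆ M)` is again of this kind, hence another multiple of
`s_λ`, and the constants are compared at `M = 1`.
-/

open Finset MvPolynomial

theorem lt_card_filter_range_iff {L : ℕ} {p : ℕ → Prop} [DecidablePred p]
    (hp : ∀ a b, a ≤ b → b < L → p b → p a) {j : ℕ} (hj : j < L) :
    j < #{a ∈ range L | p a} ↔ p j := by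
  refine ⟨fun h ↦ ?_, fun h ↦ ?_⟩
  · by_contra hpj
    have hsub : {a ∈ range L | p a} ⊆ range j := fun a ha ↦ by
      rw [mem_filter, mem_range] at ha
      exact mem_range.2 (lt_of_not_ge fun hja ↦ hpj (hp j a hja ha.1 ha.2))
    exact (card_le_card hsub).not_gt (by rwa [card_range])
  · have hsub : range (j + 1) ⊆ {a ∈ range L | p a} := fun a ha ↦ by
      have haj : a ≤ j := Nat.lt_succ_iff.1 (mem_range.1 ha)
      exact mem_filter.2 ⟨mem_range.2 (haj.trans_lt hj), hp a j haj hj h⟩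
    simpa using card_le_card hsub

/-- The diagrams `μ` with `n` rows that interlace a diagram `lam` with `n + 1` rows, that is,
those for which `lam / μ` is a horizontal strip. -/
def interlacing {n : ℕ} (lam : Fin (n + 1) → ℕ) : Finset (Fin n → ℕ) :=
  Fintype.piFinset fun i ↦ Icc (lam i.succ) (lam i.castSucc)

theorem mem_interlacing {n : ℕ} {lam : Fin (n + 1) → ℕ} {μ : Fin n → ℕ} :
    μ ∈ interlacing lam ↔ ∀ i, lam i.succ ≤ μ i ∧ μ i ≤ lam i.castSucc := by
  simp [interlacing]

theorem antitone_of_mem_interlacing {n : ℕ} {lam : Fin (n + 1) → ℕ} {μ : Fin n → ℕ}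
    (hlam : Antitone lam) (hμ : μ ∈ interlacing lam) : Antitone μ := by
  intro i j hij
  rcases hij.eq_or_lt with rfl | hlt
  · exact le_rfl
  · have h := hlam (Fin.castSucc_lt_iff_succ_le.1 (Fin.castSucc_lt_castSucc_iff.2 hlt))
    exact (mem_interlacing.1 hμ j).2.trans (h.trans (mem_interlacing.1 hμ i).1)

namespace SSYT

theorem ext_of_lt {N : ℕ} {lam : Fin N → ℕ} {S T : SSYT N lam}
    (h : ∀ i j, j < lam i → S.entry i j = T.entry i j) : S = T := by
  have hentry : S.entry = T.entry := by
    funext i j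
    rcases lt_or_ge j (lam i) with hj | hj
    · exact h i j hj
    · exact Fin.ext ((S.zeroOutside i j hj).trans (T.zeroOutside i j hj).symm)
  cases S
  cases T
  congr

noncomputable instance (N : ℕ) (lam : Fin N → ℕ) : Fintype (SSYT N lam) :=
  Fintype.ofInjective (fun T (i : Fin N) (j : Fin (lam i)) ↦ T.entry i j) fun _ _ h ↦
    ext_of_lt fun i j hj ↦ congrFun (congrFun h i) ⟨j, hj⟩

theorem row_le_entry {N : ℕ} {lam : Fin N → ℕ} (hlam : Antitone lam) (T : SSYT N lam) (i : Fin N)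
    {j : ℕ} (hj : j < lam i) : i ≤ T.entry i j := by
  obtain ⟨i, hi⟩ := i
  induction i with
  | zero => exact Nat.zero_le _
  | succ i ih =>
    have hlt : (⟨i, by omega⟩ : Fin N) < ⟨i + 1, hi⟩ := Nat.lt_succ_self i
    exact (ih (by omega) (hj.trans_le (hlam hlt.le))).trans_lt (T.colStrict _ _ hlt j hj)

/-- The shape left over when all cells containing the largest entry are removed. -/
def innerShape {n : ℕ} {lam : Fin (n + 1) → ℕ} (T : SSYT (n + 1) lam) (i : Fin n) : ℕ :=
  #{j ∈ range (lam i.castSucc) | T.entry i.castSucc j ≠ Fin.last n}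

theorem lt_innerShape_iff {n : ℕ} {lam : Fin (n + 1) → ℕ} (T : SSYT (n + 1) lam) {i : Fin n}
    {j : ℕ} (hj : j < lam i.castSucc) :
    j < T.innerShape i ↔ T.entry i.castSucc j ≠ Fin.last n :=
  lt_card_filter_range_iff (p := fun j ↦ T.entry i.castSucc j ≠ Fin.last n)
    (fun a b hab hb hne heq ↦
      hne (le_antisymm (Fin.le_last _) (heq ▸ T.rowWeak i.castSucc a b hab hb))) hj

theorem innerShape_mem_interlacing {n : ℕ} {lam : Fin (n + 1) → ℕ} (hlam : Antitone lam)
    (T : SSYT (n + 1) lam) : T.innerShape ∈ interlacing lam := by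
  refine mem_interlacing.2 fun i ↦ ⟨le_of_not_gt fun h ↦ ?_, ?_⟩
  · have hlt := T.colStrict i.castSucc i.succ Fin.castSucc_lt_succ _ h
    exact lt_irrefl _ ((T.lt_innerShape_iff (h.trans_le (hlam Fin.castSucc_lt_succ.le))).2
      (hlt.trans_le (Fin.le_last _)).ne)
  · exact (card_filter_le _ _).trans (card_range _).le

section AddStrip

variable {n : ℕ} {lam : Fin (n + 1) → ℕ} {μ : Fin n → ℕ}

/-- Fill the horizontal strip `lam / μ` with the largest entry. -/
def addStrip (hlam : Antitone lam) (hμ : μ ∈ interlacing lam) (T : SSYT n μ) :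
    SSYT (n + 1) lam where
  entry i j := Fin.lastCases (motive := fun _ ↦ Fin (n + 1))
    (if j < lam (Fin.last n) then Fin.last n else 0)
    (fun i ↦ if j < μ i then (T.entry i j).castSucc else
      if j < lam i.castSucc then Fin.last n else 0) i
  rowWeak i j₁ j₂ h₁₂ h₂ := by
    have h₁ := h₁₂.trans_lt h₂
    cases i using Fin.lastCases with
    | last => simp [h₁, h₂]
    | cast i =>
      simp only [Fin.lastCases_castSucc, h₁, h₂, if_true]
      by_cases hj : j₂ < μ i
      · simpa only [hj, h₁₂.trans_lt hj, if_true] using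
          Fin.castSucc_le_castSucc_iff.2 (T.rowWeak i j₁ j₂ h₁₂ hj)
      · simpa only [hj, if_false] using Fin.le_last _
  colStrict i₁ i₂ h₁₂ j hj := by
    cases i₁ using Fin.lastCases with
    | last => exact absurd h₁₂ (Fin.le_last _).not_gt
    | cast i₁ =>
      have hj₁ : j < μ i₁ := hj.trans_le
        ((hlam (Fin.castSucc_lt_iff_succ_le.1 h₁₂)).trans (mem_interlacing.1 hμ i₁).1)
      cases i₂ using Fin.lastCases with
      | last => simp [hj, hj₁, Fin.castSucc_lt_last]
      | cast i₂ =>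
        simp only [Fin.lastCases_castSucc, hj, hj₁, if_true]
        by_cases hj₂ : j < μ i₂
        · simpa only [hj₂, if_true] using Fin.castSucc_lt_castSucc_iff.2
            (T.colStrict i₁ i₂ (Fin.castSucc_lt_castSucc_iff.1 h₁₂) j hj₂)
        · simpa only [hj₂, if_false] using Fin.castSucc_lt_last _
  zeroOutside i j hj := by
    cases i using Fin.lastCases with
    | last => simp [hj.not_gt]
    | cast i => simp [hj.not_gt, ((mem_interlacing.1 hμ i).2.trans hj).not_gt]

variable (hlam : Antitone lam) (hμ : μ ∈ interlacing lam)

theorem addStrip_entry_of_lt (T : SSYT n μ) {i : Fin n} {j : ℕ} (hj : j < μ i) :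
    (T.addStrip hlam hμ).entry i.castSucc j = (T.entry i j).castSucc := by
  simp [addStrip, hj]

theorem addStrip_entry_of_le (T : SSYT n μ) {i : Fin n} {j : ℕ} (hμj : μ i ≤ j)
    (hj : j < lam i.castSucc) : (T.addStrip hlam hμ).entry i.castSucc j = Fin.last n := by
  simp [addStrip, hμj.not_gt, hj]

theorem addStrip_entry_last (T : SSYT n μ) {j : ℕ} (hj : j < lam (Fin.last n)) :
    (T.addStrip hlam hμ).entry (Fin.last n) j = Fin.last n := by
  simp [addStrip, hj]

theorem addStrip_entry_eq_last_iff (T : SSYT n μ) {i : Fin n} {j : ℕ} (hj : j < lam i.castSucc) :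
    (T.addStrip hlam hμ).entry i.castSucc j = Fin.last n ↔ μ i ≤ j := by
  refine ⟨fun h ↦ le_of_not_gt fun hlt ↦ ?_, fun h ↦ addStrip_entry_of_le hlam hμ T h hj⟩
  rw [addStrip_entry_of_lt hlam hμ T hlt] at h
  exact (Fin.castSucc_lt_last _).ne h

theorem addStrip_entry_eq_castSucc_iff (T : SSYT n μ) {i k : Fin n} {j : ℕ}
    (hj : j < lam i.castSucc) :
    (T.addStrip hlam hμ).entry i.castSucc j = k.castSucc ↔ j < μ i ∧ T.entry i j = k := by
  rcases lt_or_ge j (μ i) with h | h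
  · simp [addStrip_entry_of_lt hlam hμ T h, h]
  · simp [addStrip_entry_of_le hlam hμ T h hj, h.not_gt, (Fin.castSucc_lt_last k).ne']

theorem innerShape_addStrip (T : SSYT n μ) : (T.addStrip hlam hμ).innerShape = μ := by
  funext i
  have hfilter : {j ∈ range (lam i.castSucc) |
      (T.addStrip hlam hμ).entry i.castSucc j ≠ Fin.last n} = range (μ i) := by
    ext j
    rw [mem_filter, mem_range, mem_range]
    refine ⟨fun ⟨hj, h⟩ ↦ ?_, fun h ↦ ?_⟩
    · exact lt_of_not_ge (mt (addStrip_entry_eq_last_iff hlam hμ T hj).2 h)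
    · have hj := h.trans_le (mem_interlacing.1 hμ i).2
      exact ⟨hj, mt (addStrip_entry_eq_last_iff hlam hμ T hj).1 h.not_ge⟩
  rw [innerShape, hfilter, card_range]

theorem addStrip_injective : Function.Injective (addStrip hlam hμ) := by
  refine fun S T h ↦ ext_of_lt fun i j hj ↦ Fin.castSucc_injective n ?_
  rw [← addStrip_entry_of_lt hlam hμ S hj, ← addStrip_entry_of_lt hlam hμ T hj, h]

theorem exists_addStrip_eq (S : SSYT (n + 1) lam) (hS : S.innerShape = μ) :
    ∃ T, addStrip hlam hμ T = S := by
  have hle (i) : μ i ≤ lam i.castSucc := (mem_interlacing.1 hμ i).2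
  have hne {i : Fin n} {j : ℕ} (hj : j < μ i) : S.entry i.castSucc j ≠ Fin.last n :=
    (S.lt_innerShape_iff (hj.trans_le (hle i))).1 (hS ▸ hj)
  let T : SSYT n μ :=
    { entry := fun i j ↦ if h : j < μ i then (S.entry i.castSucc j).castPred (hne h) else
        ⟨0, i.pos⟩
      rowWeak := fun i j₁ j₂ h₁₂ h₂ ↦ by
        simpa only [h₂, h₁₂.trans_lt h₂, dif_pos] using
          Fin.castPred_le_castPred_iff.2 (S.rowWeak _ _ _ h₁₂ (h₂.trans_le (hle i)))
      colStrict := fun i₁ i₂ h₁₂ j hj ↦ by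
        have hj₁ := hj.trans_le (antitone_of_mem_interlacing hlam hμ h₁₂.le)
        simpa only [hj, hj₁, dif_pos] using Fin.castPred_lt_castPred_iff.2
          (S.colStrict _ _ (Fin.castSucc_lt_castSucc_iff.2 h₁₂) _ (hj.trans_le (hle i₂)))
      zeroOutside := fun i j hj ↦ by simp [hj.not_gt] }
  refine ⟨T, ext_of_lt fun i j hj ↦ ?_⟩
  cases i using Fin.lastCases with
  | last =>
    rw [addStrip_entry_last hlam hμ T hj]
    exact le_antisymm (S.row_le_entry hlam _ hj) (Fin.le_last _)
  | cast i =>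
    rcases lt_or_ge j (μ i) with h | h
    · simp [addStrip_entry_of_lt hlam hμ T h, T, h]
    · rw [addStrip_entry_of_le hlam hμ T h hj]
      by_contra hlast
      exact h.not_gt (hS ▸ (S.lt_innerShape_iff hj).2 (Ne.symm hlast))

theorem content_addStrip_castSucc (T : SSYT n μ) (k : Fin n) :
    (T.addStrip hlam hμ).content k.castSucc = T.content k := by
  have hlast : {j ∈ range (lam (Fin.last n)) |
      (T.addStrip hlam hμ).entry (Fin.last n) j = k.castSucc} = ∅ :=
    filter_eq_empty_iff.2 fun j hj ↦ by
      rw [addStrip_entry_last hlam hμ T (mem_range.1 hj)]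
      exact (Fin.castSucc_lt_last k).ne'
  rw [content, Fin.sum_univ_castSucc, hlast, card_empty, add_zero, content]
  refine sum_congr rfl fun i _ ↦ congrArg card ?_
  ext j
  rw [mem_filter, mem_filter, mem_range, mem_range]
  refine ⟨fun ⟨hj, h⟩ ↦ (addStrip_entry_eq_castSucc_iff hlam hμ T hj).1 h, fun h ↦ ?_⟩
  have hj := h.1.trans_le (mem_interlacing.1 hμ i).2
  exact ⟨hj, (addStrip_entry_eq_castSucc_iff hlam hμ T hj).2 h⟩

theorem content_addStrip_last (T : SSYT n μ) : (T.addStrip hlam hμ).content (Fin.last n) =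
    ∑ i : Fin n, (lam i.castSucc - μ i) + lam (Fin.last n) := by
  rw [content, Fin.sum_univ_castSucc, filter_true_of_mem fun j hj ↦
    addStrip_entry_last hlam hμ T (mem_range.1 hj), card_range]
  congr 1
  refine sum_congr rfl fun i _ ↦ ?_
  rw [← Nat.card_Ico]
  congr 1
  ext j
  rw [mem_filter, mem_range, mem_Ico, and_comm, and_congr_left_iff]
  exact fun hj ↦ addStrip_entry_eq_last_iff hlam hμ T hj

end AddStrip

end SSYT

section SchurSum

variable {R : Type*} [CommRing R]

/-- The Schur polynomial as a finite sum, which unlike `schur` needs no topology on the ring. -/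
noncomputable def schurSum {N : ℕ} (lam : Fin N → ℕ) (x : Fin N → R) : R :=
  ∑ T : SSYT N lam, ∏ k, x k ^ T.content k

theorem schur_eq_schurSum [TopologicalSpace R] (N : ℕ) (lam : Fin N → ℕ) (x : Fin N → R) :
    schur N lam x = schurSum lam x :=
  tsum_fintype _

theorem map_schurSum {S F : Type*} [CommRing S] [FunLike F R S] [RingHomClass F R S] (f : F) {N : ℕ}
    (lam : Fin N → ℕ) (x : Fin N → R) : f (schurSum lam x) = schurSum lam (f ∘ x) := by
  simp [schurSum]

theorem schurSum_zero (lam : Fin 0 → ℕ) (x : Fin 0 → R) : schurSum lam x = 1 := by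
  have hcard : Fintype.card (SSYT 0 lam) = 1 := Fintype.card_eq_one_iff.2
    ⟨⟨isEmptyElim, isEmptyElim, isEmptyElim, isEmptyElim⟩, fun _ ↦ SSYT.ext_of_lt isEmptyElim⟩
  simp [schurSum, hcard]

theorem schurSum_succ {n : ℕ} {lam : Fin (n + 1) → ℕ} (hlam : Antitone lam)
    (x : Fin (n + 1) → R) :
    schurSum lam x = ∑ μ ∈ interlacing lam, schurSum μ (x ∘ Fin.castSucc) *
      x (Fin.last n) ^ (∑ i : Fin n, (lam i.castSucc - μ i) + lam (Fin.last n)) := by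
  classical
  rw [schurSum, ← sum_fiberwise_of_maps_to fun T _ ↦ SSYT.innerShape_mem_interlacing hlam T]
  refine sum_congr rfl fun μ hμ ↦ ?_
  rw [schurSum, sum_mul]
  refine (sum_bij (fun T _ ↦ T.addStrip hlam hμ) ?_ ?_ ?_ ?_).symm
  · exact fun T _ ↦ mem_filter.2 ⟨mem_univ _, SSYT.innerShape_addStrip hlam hμ T⟩
  · exact fun S _ T _ h ↦ SSYT.addStrip_injective hlam hμ h
  · intro S hS
    obtain ⟨T, hT⟩ := SSYT.exists_addStrip_eq hlam hμ S (mem_filter.1 hS).2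
    exact ⟨T, mem_univ _, hT⟩
  · intro T _
    simp only [Fin.prod_univ_castSucc, SSYT.content_addStrip_last, SSYT.content_addStrip_castSucc,
      Function.comp_apply]

end SchurSum

section Alternant

variable {R : Type*} [CommRing R]

/-- The alternant `a_l(x) = det (x_j ^ l_i)`; the partition `λ` corresponds to the exponents
`l_i = λ_i + N - i`, written `lam i + i.rev` because `i.rev` is `N - 1 - i` for indices from `0`. -/
def alternant {N : ℕ} (l : Fin N → ℕ) (x : Fin N → R) : R :=
  Matrix.det (Matrix.of fun i j ↦ x j ^ l i)

theorem map_alternant {S F : Type*} [CommRing S] [FunLike F R S] [RingHomClass F R S] (f : F)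
    {N : ℕ} (l : Fin N → ℕ) (x : Fin N → R) : f (alternant l x) = alternant l (f ∘ x) := by
  simp [alternant, Matrix.det_apply]

theorem alternant_comp_perm {N : ℕ} (l : Fin N → ℕ) (x : Fin N → R) (σ : Equiv.Perm (Fin N)) :
    alternant l (x ∘ σ) = (Equiv.Perm.sign σ : ℤ) * alternant l x :=
  Matrix.det_permute' σ (Matrix.of fun i j ↦ x j ^ l i)

theorem alternant_rev_eq_prod {N : ℕ} (x : Fin N → R) :
    alternant (fun i ↦ (i.rev : ℕ)) x = ∏ i, ∏ j ∈ Ioi i, (x i - x j) := by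
  have htranspose : (Matrix.of fun i j ↦ x j ^ (i.rev : ℕ)) =
      (Matrix.projVandermonde (fun _ ↦ (1 : R)) x).transpose := by
    ext i j
    simp [Matrix.projVandermonde_apply]
  rw [alternant, htranspose, Matrix.det_transpose, Matrix.det_projVandermonde]
  simp only [one_mul]

theorem det_of_sum_mul_pow {n : ℕ} (s : Fin n → Finset ℕ) (c : Fin n → ℕ → R) (x : Fin n → R) :
    Matrix.det (Matrix.of fun i j ↦ ∑ m ∈ s i, c i m * x j ^ m) =
      ∑ m ∈ Fintype.piFinset s, (∏ i, c i (m i)) * alternant m x := by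
  have hrows : (Matrix.of fun i j ↦ ∑ m ∈ s i, c i m * x j ^ m) =
      fun i ↦ ∑ m ∈ s i, fun j ↦ c i m * x j ^ m := by
    ext i j
    simp
  calc
    _ = Matrix.detRowAlternating fun i ↦ ∑ m ∈ s i, fun j ↦ c i m * x j ^ m := by
      rw [hrows]
      rfl
    _ = ∑ m ∈ Fintype.piFinset s, Matrix.detRowAlternating fun i j ↦ c i (m i) * x j ^ m i :=
      Matrix.detRowAlternating.toMultilinearMap.map_sum_finset (fun i m j ↦ c i m * x j ^ m) s
    _ = _ := sum_congr rfl fun m _ ↦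
      Matrix.det_mul_column (fun i ↦ c i (m i)) (Matrix.of fun i j ↦ x j ^ m i)

/-- Subtracting `x_n ^ (l_i - l_{i+1})` times row `i + 1` from row `i` clears the last column. -/
theorem alternant_eq_mul_det_sub {n : ℕ} {l : Fin (n + 1) → ℕ} (hl : Antitone l)
    (x : Fin (n + 1) → R) :
    alternant l x = x (Fin.last n) ^ l (Fin.last n) *
      Matrix.det (Matrix.of fun i j : Fin n ↦ x j.castSucc ^ l i.castSucc -
        x (Fin.last n) ^ (l i.castSucc - l i.succ) * x j.castSucc ^ l i.succ) := by
  set z := x (Fin.last n) with hz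
  let B : Matrix (Fin (n + 1)) (Fin (n + 1)) R := Matrix.of fun i j ↦
    Fin.lastCases (motive := fun _ ↦ R) (x j ^ l (Fin.last n))
      (fun i ↦ x j ^ l i.castSucc - z ^ (l i.castSucc - l i.succ) * x j ^ l i.succ) i
  have hdetB : alternant l x = B.det := by
    rw [alternant, ← Matrix.det_submatrix_equiv_self Fin.revPerm,
      ← Matrix.det_submatrix_equiv_self Fin.revPerm B]
    refine Matrix.det_eq_of_forall_row_eq_smul_add_pred
      (fun i ↦ z ^ (l i.rev.castSucc - l i.rev.succ)) (fun j ↦ ?_) fun i j ↦ ?_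
    · simp [B]
    · simp only [Matrix.submatrix_apply, Fin.revPerm_apply, Matrix.of_apply, Fin.rev_succ,
        Fin.rev_castSucc, B, Fin.lastCases_castSucc]
      ring
  have hcol (i : Fin n) : B i.castSucc (Fin.last n) = 0 := by
    simp only [B, Matrix.of_apply, Fin.lastCases_castSucc, ← hz, ← pow_add,
      Nat.sub_add_cancel (hl Fin.castSucc_lt_succ.le), sub_self]
  rw [hdetB, Matrix.det_succ_column B (Fin.last n), Fin.sum_univ_castSucc,
    sum_eq_zero fun i _ ↦ by rw [hcol, mul_zero, zero_mul], zero_add, Even.neg_one_pow ⟨_, rfl⟩,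
      one_mul]
  congr 1
  · simp [B, hz]
  · congr 1
    ext i j
    simp [B, Fin.succAbove_last]

theorem alternant_succ {n : ℕ} {l : Fin (n + 1) → ℕ} (hl : Antitone l) (x : Fin (n + 1) → R) :
    alternant l x = x (Fin.last n) ^ l (Fin.last n) *
      ((∏ j : Fin n, (x j.castSucc - x (Fin.last n))) *
      ∑ m ∈ Fintype.piFinset fun i : Fin n ↦ Ico (l i.succ) (l i.castSucc),
        (∏ i, x (Fin.last n) ^ (l i.castSucc - 1 - m i)) * alternant m (x ∘ Fin.castSucc)) := by
  have hfactor (z : R) (i j : Fin n) :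
      x j.castSucc ^ l i.castSucc - z ^ (l i.castSucc - l i.succ) * x j.castSucc ^ l i.succ =
        (x j.castSucc - z) * ∑ m ∈ Ico (l i.succ) (l i.castSucc),
          z ^ (l i.castSucc - 1 - m) * x j.castSucc ^ m := by
    rw [mul_comm (z ^ _), ← mul_geom_sum₂_Ico _ _ (hl Fin.castSucc_lt_succ.le)]
    simp only [mul_comm]
  rw [alternant_eq_mul_det_sub hl x]
  simp only [hfactor]
  rw [← det_of_sum_mul_pow (fun i : Fin n ↦ Ico (l i.succ) (l i.castSucc))
    (fun i m ↦ x (Fin.last n) ^ (l i.castSucc - 1 - m))]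
  congr 1
  exact Matrix.det_mul_row _ (Matrix.of fun i j : Fin n ↦ ∑ m ∈ Ico (l i.succ) (l i.castSucc),
    x (Fin.last n) ^ (l i.castSucc - 1 - m) * x j.castSucc ^ m)

theorem strictAnti_add_rev {N : ℕ} {lam : Fin N → ℕ} (hlam : Antitone lam) :
    StrictAnti fun i ↦ lam i + (i.rev : ℕ) :=
  fun _ _ hij ↦ add_lt_add_of_le_of_lt (hlam hij.le) (Fin.rev_lt_rev.2 hij)

theorem alternant_add_rev_succ {n : ℕ} {lam : Fin (n + 1) → ℕ} (hlam : Antitone lam)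
    (x : Fin (n + 1) → R) :
    alternant (fun i ↦ lam i + (i.rev : ℕ)) x =
      (∏ j : Fin n, (x j.castSucc - x (Fin.last n))) *
      ∑ μ ∈ interlacing lam, alternant (fun i ↦ μ i + (i.rev : ℕ)) (x ∘ Fin.castSucc) *
        x (Fin.last n) ^ (∑ i : Fin n, (lam i.castSucc - μ i) + lam (Fin.last n)) := by
  rw [alternant_succ (strictAnti_add_rev hlam).antitone x, mul_left_comm, mul_sum]
  congr 1
  refine (sum_bij' (fun μ _ i ↦ μ i + (i.rev : ℕ)) (fun m _ i ↦ m i - (i.rev : ℕ))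
    ?_ ?_ ?_ ?_ ?_).symm
  · intro μ hμ
    refine Fintype.mem_piFinset.2 fun i ↦ ?_
    have := mem_interlacing.1 hμ i
    simp only [mem_Ico, Fin.rev_castSucc, Fin.rev_succ, Fin.val_succ, Fin.val_castSucc]
    omega
  · intro m hm
    refine mem_interlacing.2 fun i ↦ ?_
    have := Fintype.mem_piFinset.1 hm i
    simp only [mem_Ico, Fin.rev_castSucc, Fin.rev_succ, Fin.val_succ, Fin.val_castSucc] at this
    omega
  · exact fun μ _ ↦ funext fun i ↦ Nat.add_sub_cancel _ _
  · intro m hm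
    refine funext fun i ↦ Nat.sub_add_cancel ?_
    have := Fintype.mem_piFinset.1 hm i
    simp only [mem_Ico, Fin.rev_castSucc, Fin.rev_succ, Fin.val_succ, Fin.val_castSucc] at this
    omega
  · intro μ _
    have hexp (i : Fin n) : lam i.castSucc + (i.castSucc.rev : ℕ) - 1 - (μ i + i.rev) =
        lam i.castSucc - μ i := by
      rw [Fin.rev_castSucc, Fin.val_succ]
      omega
    simp only [hexp, prod_pow_eq_pow_sum, Fin.rev_last, Fin.val_zero, add_zero, pow_add]
    ring

/-- Jacobi's bialternant formula: both sides satisfy the same branching rule. -/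
theorem alternant_rev_mul_schurSum {N : ℕ} {lam : Fin N → ℕ} (hlam : Antitone lam)
    (x : Fin N → R) :
    alternant (fun i ↦ (i.rev : ℕ)) x * schurSum lam x =
      alternant (fun i ↦ lam i + (i.rev : ℕ)) x := by
  induction N with
  | zero => simp [alternant, schurSum_zero]
  | succ n ih =>
    have hrev : alternant (fun i ↦ (i.rev : ℕ)) x = (∏ j : Fin n, (x j.castSucc - x (Fin.last n))) *
        alternant (fun i ↦ (i.rev : ℕ)) (x ∘ Fin.castSucc) := by
      have hzero : interlacing (fun _ : Fin (n + 1) ↦ 0) = {fun _ ↦ 0} := by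
        ext μ
        simp [mem_interlacing, funext_iff]
      simpa [hzero] using alternant_add_rev_succ (lam := fun _ ↦ 0) antitone_const x
    rw [alternant_add_rev_succ hlam x, hrev, mul_assoc, schurSum_succ hlam, mul_sum]
    congr 1
    refine sum_congr rfl fun μ hμ ↦ ?_
    rw [← ih (antitone_of_mem_interlacing hlam hμ), mul_assoc]

theorem alternant_rev_X_ne_zero [IsDomain R] (N : ℕ) :
    alternant (fun i ↦ (i.rev : ℕ)) (MvPolynomial.X : Fin N → MvPolynomial (Fin N) R) ≠ 0 := by
  rw [alternant_rev_eq_prod]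
  exact prod_ne_zero_iff.2 fun i _ ↦ prod_ne_zero_iff.2 fun j hj ↦
    sub_ne_zero.2 (MvPolynomial.X_injective.ne (mem_Ioi.1 hj).ne)

end Alternant

section Dominance

/-- Dominance order on exponents, encoded by pairing with nonincreasing weights; the usual partial
sums are the pairings with indicators of initial segments. -/
def IsDominated {N : ℕ} (k l : Fin N → ℕ) : Prop :=
  ∀ w : Fin N → ℕ, Antitone w → ∑ i, w i * k i ≤ ∑ i, w i * l i

variable {N : ℕ} {k l : Fin N → ℕ}

theorem IsDominated.add {k' l' : Fin N → ℕ} (h : IsDominated k l) (h' : IsDominated k' l') :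
    IsDominated (k + k') (l + l') := fun w hw ↦ by
  simpa only [Pi.add_apply, mul_add, sum_add_distrib] using add_le_add (h w hw) (h' w hw)

theorem isDominated_comp_perm (hl : Antitone l) (σ : Equiv.Perm (Fin N)) :
    IsDominated (l ∘ σ) l :=
  fun _ hw ↦ (hw.monovary hl).sum_mul_comp_perm_le_sum_mul

theorem IsDominated.eq_of_sum_sq_eq (h : IsDominated k l) (hk : Antitone k)
    (hsq : ∑ i, k i ^ 2 = ∑ i, l i ^ 2) : k = l := by
  have hsum : ∑ i, ((l i : ℤ) - k i) ^ 2 ≤ 0 := by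
    have hle : ∑ i, (k i : ℤ) ^ 2 ≤ ∑ i, (k i : ℤ) * l i := by
      simpa only [sq] using mod_cast h k hk
    have hsq' : ∑ i, (k i : ℤ) ^ 2 = ∑ i, (l i : ℤ) ^ 2 := mod_cast hsq
    have hexpand : ∑ i, ((l i : ℤ) - k i) ^ 2 =
        ∑ i, (l i : ℤ) ^ 2 - 2 * ∑ i, (k i : ℤ) * l i + ∑ i, (k i : ℤ) ^ 2 := by
      rw [mul_sum, ← sum_sub_distrib, ← sum_add_distrib]
      exact sum_congr rfl fun i _ ↦ by ring
    linarith only [hle, hsq', hexpand]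
  have hzero := (sum_eq_zero_iff_of_nonneg fun i _ ↦ sq_nonneg ((l i : ℤ) - k i)).1
    (hsum.antisymm (sum_nonneg fun i _ ↦ sq_nonneg _))
  funext i
  have hi := pow_eq_zero_iff two_ne_zero |>.1 (hzero i (mem_univ i))
  omega

variable (R : Type*) [CommRing R]

/-- The polynomials all of whose exponents are dominated by `l`. -/
noncomputable def dominatedSubmodule (l : Fin N → ℕ) : Submodule R (MvPolynomial (Fin N) R) :=
  restrictSupport R {k | IsDominated k l}

variable {R}

theorem mem_dominatedSubmodule {p : MvPolynomial (Fin N) R} :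
    p ∈ dominatedSubmodule R l ↔ ∀ k : Fin N →₀ ℕ, coeff k p ≠ 0 → IsDominated k l := by
  simp only [dominatedSubmodule, mem_restrictSupport_iff, Set.subset_def, mem_coe, mem_support_iff,
    Set.mem_ofPred_eq]

theorem mul_mem_dominatedSubmodule {l' : Fin N → ℕ} {p q : MvPolynomial (Fin N) R}
    (hp : p ∈ dominatedSubmodule R l) (hq : q ∈ dominatedSubmodule R l') :
    p * q ∈ dominatedSubmodule R (l + l') := by
  have hpq := Submodule.mul_mem_mul hp hq
  rw [dominatedSubmodule, dominatedSubmodule, ← restrictSupport_add] at hpq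
  refine restrictSupport_mono R ?_ hpq
  rintro _ ⟨k, hk, k', hk', rfl⟩
  exact IsDominated.add hk hk'

theorem one_mem_dominatedSubmodule : (1 : MvPolynomial (Fin N) R) ∈ dominatedSubmodule R 0 :=
  (monomial_mem_restrictSupport R).2 (.inl fun _ _ ↦ le_rfl)

theorem pow_mem_dominatedSubmodule {p : MvPolynomial (Fin N) R} (hp : p ∈ dominatedSubmodule R l)
    (e : ℕ) : p ^ e ∈ dominatedSubmodule R (e • l) := by
  induction e with
  | zero => simpa using one_mem_dominatedSubmodule
  | succ e ih => simpa only [pow_succ, succ_nsmul] using mul_mem_dominatedSubmodule ih hp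

theorem prod_mem_dominatedSubmodule {ι : Type*} (s : Finset ι) {l : ι → Fin N → ℕ}
    {p : ι → MvPolynomial (Fin N) R} (hp : ∀ i ∈ s, p i ∈ dominatedSubmodule R (l i)) :
    ∏ i ∈ s, p i ∈ dominatedSubmodule R (∑ i ∈ s, l i) := by
  classical
  induction s using Finset.induction_on with
  | empty => simpa using one_mem_dominatedSubmodule
  | insert i s hi ih =>
    rw [prod_insert hi, sum_insert hi]
    exact mul_mem_dominatedSubmodule (hp i (mem_insert_self i s))
      (ih fun j hj ↦ hp j (mem_insert_of_mem hj))

end Dominance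

section Alternating

variable {R : Type*} [CommRing R] {N : ℕ}

theorem rename_alternant (l : Fin N → ℕ) (σ : Equiv.Perm (Fin N)) :
    rename σ (alternant l (X : Fin N → MvPolynomial (Fin N) R)) =
      (Equiv.Perm.sign σ : ℤ) • alternant l X := by
  have hX : (rename σ : MvPolynomial (Fin N) R → _) ∘ X = X ∘ σ := funext fun i ↦ rename_X σ i
  rw [map_alternant, hX, alternant_comp_perm, zsmul_eq_mul]

theorem alternant_X_eq_sum_monomial (l : Fin N → ℕ) :
    alternant l (X : Fin N → MvPolynomial (Fin N) R) = ∑ σ : Equiv.Perm (Fin N),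
      (Equiv.Perm.sign σ : ℤ) • monomial (Finsupp.equivFunOnFinite.symm (l ∘ σ)) (1 : R) := by
  rw [alternant, Matrix.det_apply']
  refine sum_congr rfl fun σ _ ↦ ?_
  rw [zsmul_eq_mul, monomial_eq, C_1, one_mul, Finsupp.prod_fintype _ _ fun i ↦ pow_zero _]
  rfl

theorem alternant_mem_dominatedSubmodule {l : Fin N → ℕ} (hl : Antitone l) :
    alternant l (X : Fin N → MvPolynomial (Fin N) R) ∈ dominatedSubmodule R l := by
  rw [alternant_X_eq_sum_monomial]
  exact Submodule.sum_mem _ fun σ _ ↦ zsmul_mem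
    ((monomial_mem_restrictSupport R).2 (.inl (isDominated_comp_perm hl σ))) _

theorem coeff_alternant_of_antitone {l : Fin N → ℕ} (hl : StrictAnti l) {k : Fin N →₀ ℕ}
    (hk : Antitone k) :
    coeff k (alternant l (X : Fin N → MvPolynomial (Fin N) R)) = if ⇑k = l then 1 else 0 := by
  have hperm (σ : Equiv.Perm (Fin N)) (hσ : l ∘ σ = k) : σ = 1 := by
    have hmono : StrictMono σ := fun i j hij ↦ by
      have hle : l (σ j) ≤ l (σ i) := by
        have hle := hk hij.le
        rwa [← hσ] at hle
      exact (hl.le_iff_ge.1 hle).lt_of_ne (σ.injective.ne hij.ne)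
    exact Equiv.ext fun i ↦ congrFun
      ((hmono.range_inj strictMono_id).1 (by rw [σ.surjective.range_eq, Set.range_id])) i
  have hterm (σ : Equiv.Perm (Fin N)) (hσ : σ ≠ 1) :
      coeff k (monomial (Finsupp.equivFunOnFinite.symm (l ∘ σ)) (1 : R)) = 0 := by
    rw [coeff_monomial, if_neg]
    rintro rfl
    exact hσ (hperm σ rfl)
  rw [alternant_X_eq_sum_monomial, coeff_sum, sum_eq_single 1]
  · rw [Equiv.Perm.sign_one, Units.val_one, one_smul, coeff_monomial]
    refine if_congr ⟨?_, fun h ↦ Finsupp.ext fun i ↦ (congrFun h i).symm⟩ rfl rfl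
    rintro rfl
    rfl
  · exact fun σ _ hσ ↦ by rw [coeff_smul, hterm σ hσ, smul_zero]
  · exact fun h ↦ absurd (mem_univ _) h

theorem eq_zero_of_alternating {q : MvPolynomial (Fin N) R}
    (hq : ∀ σ : Equiv.Perm (Fin N), rename σ q = (Equiv.Perm.sign σ : ℤ) • q)
    (hcoeff : ∀ k : Fin N →₀ ℕ, Antitone k → coeff k q = 0) : q = 0 := by
  ext k
  set σ : Equiv.Perm (Fin N) := Tuple.sort (OrderDual.toDual ∘ k)
  have hanti : Antitone (k ∘ σ) := fun i j hij ↦ Tuple.monotone_sort (OrderDual.toDual ∘ k) hij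
  set k' : Fin N →₀ ℕ := k.mapDomain σ.symm with hk'
  have hk'σ : ⇑k' = k ∘ σ := funext fun i ↦ by
    rw [hk', ← Finsupp.equivMapDomain_eq_mapDomain]
    simp
  rw [coeff_zero, ← coeff_rename_mapDomain σ.symm σ.symm.injective, ← hk', hq, coeff_smul,
    hcoeff k' (hk'σ ▸ hanti), smul_zero]

theorem eq_C_mul_alternant {l : Fin N → ℕ} (hl : StrictAnti l) {q : MvPolynomial (Fin N) R}
    (hq : ∀ σ : Equiv.Perm (Fin N), rename σ q = (Equiv.Perm.sign σ : ℤ) • q)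
    (hcoeff : ∀ k : Fin N →₀ ℕ, Antitone k → coeff k q ≠ 0 → k = l) :
    ∃ c, q = C c * alternant l X := by
  refine ⟨coeff (Finsupp.equivFunOnFinite.symm l) q,
    sub_eq_zero.1 (eq_zero_of_alternating (fun σ ↦ ?_) fun k hk ↦ ?_)⟩
  · rw [map_sub, map_mul, hq, rename_C, rename_alternant, smul_sub, mul_smul_comm]
  · rw [coeff_sub, coeff_C_mul, coeff_alternant_of_antitone hl hk]
    split_ifs with h
    · have hk' : k = Finsupp.equivFunOnFinite.symm l := Finsupp.ext fun i ↦ congrFun h i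
      rw [hk', mul_one, sub_self]
    · rw [not_not.1 (mt (hcoeff k hk) h), mul_zero, sub_zero]

theorem rename_schurSum_X [IsDomain R] {lam : Fin N → ℕ} (hlam : Antitone lam)
    (σ : Equiv.Perm (Fin N)) :
    rename σ (schurSum lam (X : Fin N → MvPolynomial (Fin N) R)) = schurSum lam X := by
  have h := congrArg (rename σ) (alternant_rev_mul_schurSum hlam (X : _ → MvPolynomial (Fin N) R))
  rw [map_mul, rename_alternant, rename_alternant, ← alternant_rev_mul_schurSum hlam,
    smul_mul_assoc] at h
  have hsign : ((Equiv.Perm.sign σ : ℤ) * Equiv.Perm.sign σ : ℤ) = 1 := by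
    rw [← Units.val_mul, Int.units_mul_self, Units.val_one]
  have h' := congrArg ((Equiv.Perm.sign σ : ℤ) • ·) h
  simp only [smul_smul, hsign, one_smul] at h'
  exact mul_left_cancel₀ (alternant_rev_X_ne_zero N) h'

theorem schurSum_comp_perm {lam : Fin N → ℕ} (hlam : Antitone lam) (x : Fin N → R)
    (σ : Equiv.Perm (Fin N)) : schurSum lam (x ∘ σ) = schurSum lam x := by
  have haeval (y : Fin N → R) :
      aeval y (schurSum lam (X : Fin N → MvPolynomial (Fin N) ℤ)) = schurSum lam y := by
    have hX : aeval y ∘ (X : Fin N → MvPolynomial (Fin N) ℤ) = y :=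
      funext fun i ↦ by rw [Function.comp_apply, aeval_X]
    rw [map_schurSum, hX]
  rw [← haeval (x ∘ σ), ← aeval_rename, rename_schurSum_X hlam, haeval]

end Alternating

section LogDerivative

variable {R A : Type*} [CommRing R] [CommRing A] [Algebra R A] (D : Derivation R A A)

theorem derivation_prod_eq_sum_mul {ι : Type*} (s : Finset ι) {f c : ι → A}
    (h : ∀ i ∈ s, D (f i) = c i * f i) : D (∏ i ∈ s, f i) = (∑ i ∈ s, c i) * ∏ i ∈ s, f i := by
  classical
  induction s using Finset.induction_on with
  | empty => simp
  | insert i s hi ih =>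
    rw [prod_insert hi, sum_insert hi, Derivation.leibniz, h i (mem_insert_self i s),
      ih fun j hj ↦ h j (mem_insert_of_mem hj), smul_eq_mul, smul_eq_mul]
    ring

theorem derivation_pow_eq_nsmul_mul {f c : A} (h : D f = c * f) (e : ℕ) :
    D (f ^ e) = e • c * f ^ e := by
  simpa using derivation_prod_eq_sum_mul D (range e) fun _ _ ↦ h

theorem derivation_derivation_mul (f g : A) :
    D (D (f * g)) = D (D f) * g + 2 * (D f * D g) + f * D (D g) := by
  simp only [Derivation.leibniz, map_add, smul_eq_mul]
  ring

end LogDerivative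

section EulerOperators

variable {R σ : Type*} [CommRing R]

/-- The Euler operator `x_i ∂/∂x_i`, of which the monomials are eigenvectors. -/
noncomputable def eulerOp (i : σ) : Derivation R (MvPolynomial σ R) (MvPolynomial σ R) :=
  (X i : MvPolynomial σ R) • pderiv i

theorem eulerOp_apply (i : σ) (p : MvPolynomial σ R) : eulerOp i p = X i * pderiv i p := rfl

theorem eulerOp_X [DecidableEq σ] (i j : σ) :
    eulerOp i (X j : MvPolynomial σ R) = if i = j then X j else 0 := by
  rw [eulerOp_apply, pderiv_X, Pi.single_apply]
  split_ifs with h₁ h₂ h₂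
  · rw [mul_one, h₂]
  · exact absurd h₁.symm h₂
  · exact absurd h₂.symm h₁
  · rw [mul_zero]

theorem coeff_eulerOp (i : σ) (p : MvPolynomial σ R) (k : σ →₀ ℕ) :
    coeff k (eulerOp i p) = k i * coeff k p := by
  classical
  induction p using MvPolynomial.induction_on' with
  | monomial m r =>
    rw [eulerOp_apply, X_mul_pderiv_monomial, coeff_smul, coeff_monomial, nsmul_eq_mul]
    split_ifs with h
    · rw [h]
    · rw [mul_zero, mul_zero]
  | add p q hp hq => rw [map_add, coeff_add, coeff_add, hp, hq, mul_add]

theorem coeff_sum_eulerOp_sq [Fintype σ] (p : MvPolynomial σ R) (k : σ →₀ ℕ) :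
    coeff k (∑ i, eulerOp i (eulerOp i p)) = (∑ i, (k i : R) ^ 2) * coeff k p := by
  simp only [coeff_sum, coeff_eulerOp, sum_mul, ← mul_assoc, ← sq]

end EulerOperators

section Radial

variable {R : Type*} [CommRing R] {N : ℕ}

variable (R) in
/-- The eigenvalue of the Casimir element of `gl_N` on the irreducible module of highest weight
`lam`. -/
def casimirEigenvalue (lam : Fin N → ℕ) : R :=
  ∑ i, (lam i : R) ^ 2 + ∑ i, ∑ j ∈ Ioi i, ((lam i : R) - lam j)

theorem sum_Ioi_add_eq_card_mul_sum {A : Type*} [CommRing A] (f : Fin N → A) :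
    ∑ i, ∑ j ∈ Ioi i, (f i + f j) = (N - 1 : ℕ) * ∑ i, f i := by
  rw [sum_sum_Ioi_add_eq_sum_sum_off_diag fun _ i ↦ f i, mul_sum]
  refine sum_congr rfl fun i _ ↦ ?_
  rw [sum_const, card_compl, card_singleton, Fintype.card_fin, nsmul_eq_mul]

theorem sum_add_rev_sq (lam : Fin N → ℕ) :
    ((∑ i, (lam i + (i.rev : ℕ)) ^ 2 : ℕ) : R) =
      ∑ i : Fin N, ((i.rev : ℕ) : R) ^ 2 + (N - 1 : ℕ) * (∑ i, lam i : ℕ) +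
        casimirEigenvalue R lam := by
  have hIoi : ∑ i, ∑ j ∈ Ioi i, ((lam i : R) - lam j) =
      ∑ i : Fin N, 2 * (lam i * ((i.rev : ℕ) : R)) - (N - 1 : ℕ) * ∑ i, (lam i : R) := by
    rw [← sum_Ioi_add_eq_card_mul_sum, ← sum_sub_distrib]
    refine sum_congr rfl fun i _ ↦ ?_
    have hcard : (lam i : R) * ((i.rev : ℕ) : R) = ∑ _j ∈ Ioi i, (lam i : R) := by
      rw [sum_const, Fin.card_Ioi, nsmul_eq_mul, mul_comm, Fin.val_rev, Nat.sub_sub, add_comm 1]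
    rw [hcard, mul_sum, ← sum_sub_distrib]
    exact sum_congr rfl fun _ _ ↦ by ring
  rw [casimirEigenvalue, hIoi]
  push_cast
  simp only [add_sq, sum_add_distrib, mul_assoc]
  ring

theorem sum_eulerOp_sq_alternant (l : Fin N → ℕ) :
    ∑ i, eulerOp i (eulerOp i (alternant l (X : Fin N → MvPolynomial (Fin N) R))) =
      C (∑ i, (l i : R) ^ 2) * alternant l X := by
  ext k
  rw [coeff_sum_eulerOp_sq, coeff_C_mul]
  by_cases hk : coeff k (alternant l (X : Fin N → MvPolynomial (Fin N) R)) = 0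
  · rw [hk, mul_zero, mul_zero]
  · rw [alternant_X_eq_sum_monomial, coeff_sum] at hk
    obtain ⟨σ, -, hσ⟩ := exists_ne_zero_of_sum_ne_zero hk
    rw [coeff_smul, coeff_monomial] at hσ
    have hkσ : Finsupp.equivFunOnFinite.symm (l ∘ σ) = k := by
      by_contra hne
      rw [if_neg hne, smul_zero] at hσ
      exact hσ rfl
    congr 1
    rw [← hkσ]
    exact Equiv.sum_comp σ fun i ↦ (l i : R) ^ 2

/-- Twice the cross term `∑ θ_i(a_δ) θ_i(p)` is the value at `a_δ` of a derivation for which every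
factor `x_i - x_j` of `a_δ` is an eigenvector up to a multiplier. -/
theorem two_mul_sum_eulerOp_alternant_mul {p : MvPolynomial (Fin N) R}
    {b : Fin N → Fin N → MvPolynomial (Fin N) R}
    (hb : ∀ i j, i ≠ j → (X i - X j) * b i j = X i * (eulerOp i p - eulerOp j p)) :
    ∑ i, 2 * (eulerOp i (alternant (fun i ↦ (i.rev : ℕ)) X) * eulerOp i p) =
      (∑ i, ∑ j ∈ {i}ᶜ, b j i + ((N - 1 : ℕ) : MvPolynomial (Fin N) R) * ∑ i, eulerOp i p) *
        alternant (fun i ↦ (i.rev : ℕ)) X := by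
  let D : Derivation R (MvPolynomial (Fin N) R) (MvPolynomial (Fin N) R) :=
    ∑ i, (2 * eulerOp i p) • eulerOp i
  have hD (q) : D q = ∑ i, 2 * (eulerOp i q * eulerOp i p) := by
    have hcoe : ⇑D = ∑ i, ⇑((2 * eulerOp i p) • eulerOp i) :=
      map_sum Derivation.coeFnAddMonoidHom _ univ
    rw [hcoe, Finset.sum_apply]
    refine sum_congr rfl fun i _ ↦ ?_
    rw [Derivation.smul_apply, smul_eq_mul]
    ring
  have hDX (i) : D (X i) = 2 * (X i * eulerOp i p) := by
    rw [hD, sum_eq_single i fun j _ hj ↦ by rw [eulerOp_X, if_neg hj, zero_mul, mul_zero]]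
    · rw [eulerOp_X, if_pos rfl]
    · exact fun h ↦ absurd (mem_univ i) h
  have hfactor {i j : Fin N} (hij : i ≠ j) :
      D (X i - X j) = (b j i + b i j + (eulerOp i p + eulerOp j p)) * (X i - X j) := by
    rw [map_sub, hDX, hDX]
    linear_combination hb j i hij.symm - hb i j hij
  rw [← hD, alternant_rev_eq_prod, derivation_prod_eq_sum_mul D univ fun i _ ↦
    derivation_prod_eq_sum_mul D (Ioi i) fun j hj ↦ hfactor (mem_Ioi.1 hj).ne]
  simp only [sum_add_distrib, ← sum_sum_Ioi_add_eq_sum_sum_off_diag, ← sum_Ioi_add_eq_card_mul_sum]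

/-- The radial part of the Casimir element becomes `∑ θ_i²` plus a constant when conjugated by the
Vandermonde determinant `a_δ`. -/
theorem sum_eulerOp_sq_alternant_mul {lam : Fin N → ℕ} {p : MvPolynomial (Fin N) R}
    (hhom : p.IsHomogeneous (∑ i, lam i)) {b : Fin N → Fin N → MvPolynomial (Fin N) R}
    (hb : ∀ i j, i ≠ j → (X i - X j) * b i j = X i * (eulerOp i p - eulerOp j p))
    (hcas : ∑ i, eulerOp i (eulerOp i p) + ∑ i, ∑ j ∈ {i}ᶜ, b j i =
      C (casimirEigenvalue R lam) * p) :
    ∑ i, eulerOp i (eulerOp i (alternant (fun i ↦ (i.rev : ℕ)) X * p)) =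
      C ((∑ i, (lam i + (i.rev : ℕ)) ^ 2 : ℕ) : R) *
        (alternant (fun i ↦ (i.rev : ℕ)) X * p) := by
  have heuler : ∑ i, eulerOp i p = ((∑ i, lam i : ℕ) : MvPolynomial (Fin N) R) * p := by
    rw [← nsmul_eq_mul]
    exact hhom.sum_X_mul_pderiv
  have hcross := two_mul_sum_eulerOp_alternant_mul hb
  simp only [derivation_derivation_mul, sum_add_distrib, ← sum_mul, ← mul_sum,
    sum_eulerOp_sq_alternant, sum_add_rev_sq] at hcross ⊢
  rw [heuler] at hcross
  simp only [C_add, C_mul, map_natCast]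
  linear_combination hcross + alternant (fun i ↦ (i.rev : ℕ)) X * hcas

theorem exists_eq_C_mul_schurSum [IsDomain R] [CharZero R] {lam : Fin N → ℕ} (hlam : Antitone lam)
    {p : MvPolynomial (Fin N) R} (hsymm : p.IsSymmetric) (hdom : p ∈ dominatedSubmodule R lam)
    (hhom : p.IsHomogeneous (∑ i, lam i)) {b : Fin N → Fin N → MvPolynomial (Fin N) R}
    (hb : ∀ i j, i ≠ j → (X i - X j) * b i j = X i * (eulerOp i p - eulerOp j p))
    (hcas : ∑ i, eulerOp i (eulerOp i p) + ∑ i, ∑ j ∈ {i}ᶜ, b j i =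
      C (casimirEigenvalue R lam) * p) :
    ∃ c, p = C c * schurSum lam X := by
  have hrev : Antitone fun i : Fin N ↦ (i.rev : ℕ) := fun i j hij ↦ Fin.rev_le_rev.2 hij
  set q := alternant (fun i ↦ (i.rev : ℕ)) X * p with hq
  have halt (σ : Equiv.Perm (Fin N)) : rename σ q = (Equiv.Perm.sign σ : ℤ) • q := by
    rw [hq, map_mul, rename_alternant, hsymm σ, smul_mul_assoc]
  have hqdom : q ∈ dominatedSubmodule R (lam + fun i ↦ (i.rev : ℕ)) := by
    rw [add_comm]
    exact mul_mem_dominatedSubmodule (alternant_mem_dominatedSubmodule hrev) hdom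
  have hexp (k : Fin N →₀ ℕ) (hk : Antitone k) (hkq : coeff k q ≠ 0) :
      ⇑k = fun i ↦ lam i + (i.rev : ℕ) := by
    refine (mem_dominatedSubmodule.1 hqdom k hkq).eq_of_sum_sq_eq hk ?_
    have h := congrArg (coeff k) (sum_eulerOp_sq_alternant_mul hhom hb hcas)
    rw [← hq, coeff_sum_eulerOp_sq, coeff_C_mul] at h
    exact_mod_cast mul_right_cancel₀ hkq h
  obtain ⟨c, hc⟩ := eq_C_mul_alternant (strictAnti_add_rev hlam) halt hexp
  refine ⟨c, mul_left_cancel₀ (alternant_rev_X_ne_zero N) ?_⟩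
  rw [← hq, hc, ← alternant_rev_mul_schurSum hlam]
  ring

end Radial

theorem derivation_aeval {σ R A : Type*} [CommRing R] [CommRing A] [Algebra R A]
    {D : Derivation R A A} {E : Derivation R (MvPolynomial σ R) (MvPolynomial σ R)} {g : σ → A}
    (h : ∀ p, D (g p) = aeval g (E (X p))) (f : MvPolynomial σ R) :
    D (aeval g f) = aeval g (E f) := by
  induction f using MvPolynomial.induction_on with
  | C r => simp
  | add f₁ f₂ h₁ h₂ => simp only [map_add, h₁, h₂]
  | mul_X f p hf =>
    simp only [Derivation.leibniz, map_add, map_mul, aeval_X, smul_eq_mul, hf, h]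

section MatrixPolynomials

open Matrix

variable {n R : Type*} [CommRing R]

/-- Evaluation at a matrix of a polynomial in the entries of an `n × n` matrix. -/
noncomputable def aevalMatrix {S : Type*} [CommRing S] [Algebra R S] (M : Matrix n n S) :
    MvPolynomial (n × n) R →ₐ[R] S :=
  aeval fun p ↦ M p.1 p.2

theorem mvPolynomialX_map_aevalMatrix {S : Type*} [CommRing S] [Algebra R S] (M : Matrix n n S) :
    (mvPolynomialX n n R).map (aevalMatrix M) = M :=
  Matrix.ext fun i j ↦ aeval_X _ (i, j)

theorem algHom_aevalMatrix {S T : Type*} [CommRing S] [CommRing T] [Algebra R S] [Algebra R T]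
    (g : S →ₐ[R] T) (M : Matrix n n S) (f : MvPolynomial (n × n) R) :
    g (aevalMatrix M f) = aevalMatrix (M.map g) f := by
  rw [aevalMatrix, ← AlgHom.comp_apply, comp_aeval]
  rfl

/-- The derivation of the polynomials in the entries of a matrix that sends the generic matrix
to `M`. -/
noncomputable def matrixDerivation (M : Matrix n n (MvPolynomial (n × n) R)) :
    Derivation R (MvPolynomial (n × n) R) (MvPolynomial (n × n) R) :=
  mkDerivation R fun p ↦ M p.1 p.2

theorem mvPolynomialX_map_matrixDerivation (M : Matrix n n (MvPolynomial (n × n) R)) :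
    (mvPolynomialX n n R).map (matrixDerivation M) = M :=
  Matrix.ext fun i j ↦ mkDerivation_X R _ (i, j)

theorem derivation_ext_mvPolynomialX
    {D E : Derivation R (MvPolynomial (n × n) R) (MvPolynomial (n × n) R)}
    (h : (mvPolynomialX n n R).map D = (mvPolynomialX n n R).map E) : D = E :=
  derivation_ext fun p ↦ congrFun₂ h p.1 p.2

theorem derivation_aevalMatrix {S : Type*} [CommRing S] [Algebra R S] {D : Derivation R S S}
    {M : Matrix n n S} {E : Derivation R (MvPolynomial (n × n) R) (MvPolynomial (n × n) R)}
    (h : M.map D = ((mvPolynomialX n n R).map E).map (aevalMatrix M))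
    (f : MvPolynomial (n × n) R) : D (aevalMatrix M f) = aevalMatrix M (E f) := by
  rw [aevalMatrix]
  refine derivation_aeval (fun p ↦ ?_) f
  exact congrFun₂ h p.1 p.2

variable [Fintype n]

theorem derivation_map_algebraMap_mul {S : Type*} [CommRing S] [Algebra R S]
    (D : Derivation R S S) (A : Matrix n n R) (M : Matrix n n S) :
    (A.map (algebraMap R S) * M).map D = A.map (algebraMap R S) * M.map D := by
  ext i j
  simp only [map_apply, mul_apply, map_sum, Derivation.leibniz, Derivation.map_algebraMap,
    smul_eq_mul, mul_zero, add_zero]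

theorem derivation_map_mul_algebraMap {S : Type*} [CommRing S] [Algebra R S]
    (D : Derivation R S S) (M : Matrix n n S) (B : Matrix n n R) :
    (M * B.map (algebraMap R S)).map D = M.map D * B.map (algebraMap R S) := by
  ext i j
  simp only [map_apply, mul_apply, map_sum, Derivation.leibniz, Derivation.map_algebraMap,
    smul_eq_mul, mul_zero, zero_add, mul_comm]

/-- The substitution `f(X) ↦ f(A X B)`. -/
noncomputable def sandwich (A B : Matrix n n R) :
    MvPolynomial (n × n) R →ₐ[R] MvPolynomial (n × n) R :=
  aevalMatrix (A.map C * mvPolynomialX n n R * B.map C)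

theorem algHom_map_algebraMap_mul_mul {S T : Type*} [CommRing S] [CommRing T] [Algebra R S]
    [Algebra R T] (g : S →ₐ[R] T) (A B : Matrix n n R) (M : Matrix n n S) :
    (A.map (algebraMap R S) * M * B.map (algebraMap R S)).map g =
      A.map (algebraMap R T) * M.map g * B.map (algebraMap R T) := by
  ext i j
  simp only [map_apply, mul_apply, map_sum, map_mul, AlgHom.commutes]

theorem aevalMatrix_sandwich {S : Type*} [CommRing S] [Algebra R S] (M : Matrix n n S)
    (A B : Matrix n n R) (f : MvPolynomial (n × n) R) :
    aevalMatrix M (sandwich A B f) =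
      aevalMatrix (A.map (algebraMap R S) * M * B.map (algebraMap R S)) f := by
  have hX := algHom_map_algebraMap_mul_mul (aevalMatrix M) A B (mvPolynomialX n n R)
  rw [mvPolynomialX_map_aevalMatrix] at hX
  rw [← hX, ← algHom_aevalMatrix]
  rfl

/-- The infinitesimal right translation `d/dt f(X + t X A)` at `t = 0`; for `A = single i j 1` it is
the polarization operator `∑ₖ Xₖᵢ ∂ₖⱼ`. -/
noncomputable def rightDerivation : Matrix n n R →ₗ[R]
    Derivation R (MvPolynomial (n × n) R) (MvPolynomial (n × n) R) where
  toFun A := matrixDerivation (mvPolynomialX n n R * A.map C)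
  map_add' A B := derivation_ext fun p ↦ by
    simp only [matrixDerivation, mkDerivation_X, Derivation.add_apply,
      Matrix.map_add _ (map_add C), mul_add, Matrix.add_apply]
  map_smul' r A := derivation_ext fun p ↦ by
    simp only [matrixDerivation, mkDerivation_X, Derivation.smul_apply, mul_apply, map_apply,
      Matrix.smul_apply, smul_eq_C_mul, smul_eq_mul, C_mul, mul_sum, mul_left_comm,
      RingHom.id_apply]

/-- The infinitesimal left translation `d/dt f(X + t A X)` at `t = 0`. -/
noncomputable def leftDerivation : Matrix n n R →ₗ[R]
    Derivation R (MvPolynomial (n × n) R) (MvPolynomial (n × n) R) where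
  toFun A := matrixDerivation (A.map C * mvPolynomialX n n R)
  map_add' A B := derivation_ext fun p ↦ by
    simp only [matrixDerivation, mkDerivation_X, Derivation.add_apply,
      Matrix.map_add _ (map_add C), add_mul, Matrix.add_apply]
  map_smul' r A := derivation_ext fun p ↦ by
    simp only [matrixDerivation, mkDerivation_X, Derivation.smul_apply, mul_apply, map_apply,
      Matrix.smul_apply, smul_eq_C_mul, smul_eq_mul, C_mul, mul_sum, mul_assoc, RingHom.id_apply]

theorem mvPolynomialX_map_rightDerivation (A : Matrix n n R) :
    (mvPolynomialX n n R).map (rightDerivation A) = mvPolynomialX n n R * A.map C :=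
  mvPolynomialX_map_matrixDerivation _

theorem mvPolynomialX_map_leftDerivation (A : Matrix n n R) :
    (mvPolynomialX n n R).map (leftDerivation A) = A.map C * mvPolynomialX n n R :=
  mvPolynomialX_map_matrixDerivation _

theorem lie_rightDerivation_rightDerivation (A B : Matrix n n R) :
    ⁅rightDerivation A, rightDerivation B⁆ = rightDerivation ⁅A, B⁆ := by
  have hcomp (A B : Matrix n n R) :
      ((mvPolynomialX n n R).map (rightDerivation B)).map (rightDerivation A) =
        mvPolynomialX n n R * (A * B).map C := by
    rw [mvPolynomialX_map_rightDerivation, ← algebraMap_eq, derivation_map_mul_algebraMap,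
      mvPolynomialX_map_rightDerivation, Matrix.map_mul, mul_assoc]
    rfl
  refine derivation_ext_mvPolynomialX ?_
  rw [mvPolynomialX_map_rightDerivation, Ring.lie_def, Matrix.map_sub _ (map_sub C), mul_sub,
    ← hcomp, ← hcomp]
  rfl

theorem leftDerivation_rightDerivation_comm (A B : Matrix n n R) (f : MvPolynomial (n × n) R) :
    leftDerivation A (rightDerivation B f) = rightDerivation B (leftDerivation A f) := by
  have hcomm : ((mvPolynomialX n n R).map (rightDerivation B)).map (leftDerivation A) =
      ((mvPolynomialX n n R).map (leftDerivation A)).map (rightDerivation B) := by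
    rw [mvPolynomialX_map_rightDerivation, mvPolynomialX_map_leftDerivation, ← algebraMap_eq,
      derivation_map_mul_algebraMap, derivation_map_algebraMap_mul,
      mvPolynomialX_map_rightDerivation, mvPolynomialX_map_leftDerivation]
    exact mul_assoc _ _ _
  have hlie : ⁅leftDerivation A, rightDerivation B⁆ = 0 := by
    refine derivation_ext fun p ↦ ?_
    rw [Derivation.commutator_apply, Derivation.zero_apply, sub_eq_zero]
    exact congrFun₂ hcomm p.1 p.2
  rw [← sub_eq_zero, ← Derivation.commutator_apply, hlie, Derivation.zero_apply]

variable [DecidableEq n]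

theorem rightDerivation_sandwich {A B B' : Matrix n n R} (hB : B * B' = 1) (T : Matrix n n R)
    (f : MvPolynomial (n × n) R) :
    rightDerivation T (sandwich A B f) = sandwich A B (rightDerivation (B' * T * B) f) := by
  refine derivation_aevalMatrix ?_ f
  have hBT : B * (B' * T * B) = T * B := by rw [← mul_assoc, ← mul_assoc, hB, one_mul]
  have hmap : (mvPolynomialX n n R * (B' * T * B).map C).map (sandwich A B) =
      A.map C * mvPolynomialX n n R * (T * B).map C := by
    have h := algHom_map_algebraMap_mul_mul (sandwich A B) 1 (B' * T * B) (mvPolynomialX n n R)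
    rw [Matrix.map_one _ (map_zero _) (map_one _), one_mul, one_mul, algebraMap_eq] at h
    rw [h, sandwich, mvPolynomialX_map_aevalMatrix, mul_assoc _ (B.map C), ← Matrix.map_mul, hBT]
  rw [mvPolynomialX_map_rightDerivation]
  refine Eq.trans ?_ hmap.symm
  rw [← algebraMap_eq, derivation_map_mul_algebraMap, derivation_map_algebraMap_mul,
    mvPolynomialX_map_rightDerivation, Matrix.map_mul, ← mul_assoc, ← mul_assoc]
  rfl

variable {M : Type*} [AddCommGroup M] [Module R M]

theorem sum_single_bilin_comm (β : Matrix n n R →ₗ[R] Matrix n n R →ₗ[R] M) (P : Matrix n n R) :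
    ∑ i, ∑ j, β (P * single i j 1) (single j i 1) =
      ∑ i, ∑ j, β (single i j 1) (single j i 1 * P) := by
  have hleft (i j : n) : P * single i j 1 = ∑ k, P k i • single k j (1 : R) := by
    ext k l
    simp only [Matrix.sum_apply, Matrix.smul_apply, single_apply, mul_apply, smul_eq_mul]
    simp [ite_and]
  have hright (i j : n) : single j i 1 * P = ∑ k, P i k • single j k (1 : R) := by
    ext k l
    simp only [Matrix.sum_apply, Matrix.smul_apply, single_apply, mul_apply, smul_eq_mul]
    simp [ite_and]
  simp only [hleft, hright, map_sum, LinearMap.sum_apply, map_smul, LinearMap.smul_apply]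
  calc ∑ i, ∑ j, ∑ k, P k i • β (single k j 1) (single j i 1)
    _ = ∑ i, ∑ k, ∑ j, P k i • β (single k j 1) (single j i 1) := sum_congr rfl fun i _ ↦ sum_comm
    _ = ∑ k, ∑ i, ∑ j, P k i • β (single k j 1) (single j i 1) := sum_comm
    _ = ∑ k, ∑ j, ∑ i, P k i • β (single k j 1) (single j i 1) := sum_congr rfl fun k _ ↦ sum_comm

theorem sum_single_bilin_comm' (β : Matrix n n R →ₗ[R] Matrix n n R →ₗ[R] M) (P : Matrix n n R) :
    ∑ i, ∑ j, β (single i j 1 * P) (single j i 1) =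
      ∑ i, ∑ j, β (single i j 1) (P * single j i 1) := by
  rw [sum_comm, sum_comm (f := fun i j ↦ β (single i j 1) (P * single j i 1))]
  exact (sum_single_bilin_comm β.flip P).symm

theorem sum_single_bilin_conj (β : Matrix n n R →ₗ[R] Matrix n n R →ₗ[R] M) {B B' : Matrix n n R}
    (hB : B * B' = 1) :
    ∑ i, ∑ j, β (B' * single i j 1 * B) (B' * single j i 1 * B) =
      ∑ i, ∑ j, β (single i j 1) (single j i 1) := by
  have hB' := mul_eq_one_comm.1 hB
  have hleft := sum_single_bilin_comm (β.compl₁₂ (LinearMap.mulRight R B)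
    (LinearMap.mulLeft R B' ∘ₗ LinearMap.mulRight R B)) B'
  have hright := sum_single_bilin_comm' (β.compl₂ (LinearMap.mulLeft R B')) B
  simp only [LinearMap.compl₁₂_apply, LinearMap.compl₂_apply, LinearMap.comp_apply,
    LinearMap.mulLeft_apply, LinearMap.mulRight_apply, mul_assoc, hB', mul_one] at hleft hright ⊢
  rw [hleft, hright]
  simp only [← mul_assoc, hB', one_mul]

/-- The quadratic Casimir element of `gl_n`, acting by infinitesimal right translations. -/
noncomputable def casimir : MvPolynomial (n × n) R →ₗ[R] MvPolynomial (n × n) R :=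
  ∑ i, ∑ j, (rightDerivation (single j i 1)).toLinearMap ∘ₗ
    (rightDerivation (single i j 1)).toLinearMap

theorem casimir_apply (f : MvPolynomial (n × n) R) :
    casimir f = ∑ i, ∑ j, rightDerivation (single j i 1) (rightDerivation (single i j 1) f) := by
  simp only [casimir, LinearMap.sum_apply, LinearMap.comp_apply, Derivation.coeFn_coe]

theorem casimir_sandwich (A : Matrix n n R) {B B' : Matrix n n R} (hB : B * B' = 1)
    (f : MvPolynomial (n × n) R) : casimir (sandwich A B f) = sandwich A B (casimir f) := by
  let β : Matrix n n R →ₗ[R] Matrix n n R →ₗ[R] MvPolynomial (n × n) R :=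
    LinearMap.mk₂ R (fun S T ↦ rightDerivation T (rightDerivation S f))
      (fun S S' T ↦ by simp only [map_add, Derivation.add_apply])
      (fun r S T ↦ by simp only [map_smul, Derivation.smul_apply, Derivation.map_smul])
      (fun S T T' ↦ by simp only [map_add, Derivation.add_apply])
      (fun r S T ↦ by simp only [map_smul, Derivation.smul_apply])
  have hβ := congrArg (sandwich A B) (sum_single_bilin_conj β hB)
  simp only [casimir_apply, rightDerivation_sandwich hB]
  simpa only [β, LinearMap.mk₂_apply, map_sum] using hβ

end MatrixPolynomials

section DiagonalRestriction

open Matrix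

variable {n R : Type*} [DecidableEq n] [CommRing R]

/-- The restriction to diagonal matrices of a polynomial in the entries of a matrix. -/
noncomputable def diagonalRestriction : MvPolynomial (n × n) R →ₐ[R] MvPolynomial n R :=
  aevalMatrix (diagonal X)

theorem diagonalRestriction_X (i j : n) :
    diagonalRestriction (X (i, j) : MvPolynomial (n × n) R) = if i = j then X i else 0 := by
  rw [diagonalRestriction, aevalMatrix, aeval_X, diagonal_apply]

theorem eval_diagonalRestriction (x : n → R) (f : MvPolynomial (n × n) R) :
    eval x (diagonalRestriction f) = aevalMatrix (diagonal x) f := by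
  have hX : (diagonal X).map (aeval x : MvPolynomial n R →ₐ[R] R) = diagonal x := by
    rw [diagonal_map (map_zero _)]
    exact congrArg diagonal (funext fun i ↦ by rw [aeval_X])
  exact (algHom_aevalMatrix (aeval x) _ f).trans (congrArg (aevalMatrix · f) hX)

theorem diagonalRestriction_derivation_eq_zero
    {D : Derivation R (MvPolynomial (n × n) R) (MvPolynomial (n × n) R)}
    (h : ∀ i j, diagonalRestriction (D (X (i, j))) = 0) (f : MvPolynomial (n × n) R) :
    diagonalRestriction (D f) = 0 := by
  rw [diagonalRestriction, aevalMatrix] at h ⊢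
  rw [← derivation_aeval (D := 0) (fun p ↦ ?_) f, Derivation.zero_apply]
  rw [Derivation.zero_apply, h p.1 p.2]

variable [Fintype n]

theorem rightDerivation_single_X (i j k l : n) :
    rightDerivation (single i j (1 : R)) (X (k, l)) = if j = l then X (k, i) else 0 := by
  rw [rightDerivation]
  refine (mkDerivation_X R _ (k, l)).trans ?_
  simp [mul_apply, single_apply, ite_and]

theorem leftDerivation_single_X (i j k l : n) :
    leftDerivation (single i j (1 : R)) (X (k, l)) = if i = k then X (j, l) else 0 := by
  rw [leftDerivation]
  refine (mkDerivation_X R _ (k, l)).trans ?_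
  simp [mul_apply, single_apply, ite_and]

theorem eulerOp_diagonalRestriction (i : n) (f : MvPolynomial (n × n) R) :
    eulerOp i (diagonalRestriction f) =
      diagonalRestriction (rightDerivation (single i i 1) f) := by
  rw [diagonalRestriction, aevalMatrix]
  refine derivation_aeval (fun ⟨k, l⟩ ↦ ?_) f
  rw [rightDerivation_single_X, diagonal_apply]
  by_cases hkl : k = l <;> by_cases hil : i = l <;> simp [hkl, hil, eulerOp_X]

theorem X_mul_diagonalRestriction_rightDerivation (i j : n) (f : MvPolynomial (n × n) R) :
    X j * diagonalRestriction (rightDerivation (single i j 1) f) =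
      X i * diagonalRestriction (leftDerivation (single i j 1) f) := by
  have h := diagonalRestriction_derivation_eq_zero (D := (X (j, j) : MvPolynomial (n × n) R) •
    rightDerivation (single i j (1 : R)) - (X (i, i) : MvPolynomial (n × n) R) •
    leftDerivation (single i j 1)) (fun k l ↦ ?_) f
  · simpa only [Derivation.sub_apply, Derivation.smul_apply, smul_eq_mul, map_sub, map_mul,
      diagonalRestriction_X, if_true, sub_eq_zero] using h
  · simp only [Derivation.sub_apply, Derivation.smul_apply, smul_eq_mul, map_sub, map_mul,
      diagonalRestriction_X, if_true, rightDerivation_single_X, leftDerivation_single_X]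
    by_cases hjl : j = l <;> by_cases hik : i = k <;>
      simp [hjl, hik, diagonalRestriction_X, eq_comm, mul_comm]

end DiagonalRestriction

section CentralEigenvector

open Matrix

variable {R : Type*} [CommRing R] {N : ℕ}

theorem isHomogeneous_aevalMatrix {σ n : Type*} {f : MvPolynomial (n × n) R} {d : ℕ}
    (hf : f.IsHomogeneous d) {M : Matrix n n (MvPolynomial σ R)}
    (hM : ∀ i j, (M i j).IsHomogeneous 1) : (aevalMatrix M f).IsHomogeneous d := by
  rw [aevalMatrix, ← one_mul d]
  exact hf.aeval _ fun p ↦ hM p.1 p.2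

theorem sub_mul_diagonalRestriction_rightDerivation {n : Type*} [Fintype n] [DecidableEq n]
    {f : MvPolynomial (n × n) R} (hf : ∀ A, leftDerivation A f = rightDerivation A f) (i j : n) :
    (X i - X j) * diagonalRestriction (rightDerivation (single i j 1)
        (rightDerivation (single j i 1) f)) =
      X i * (eulerOp i (diagonalRestriction f) - eulerOp j (diagonalRestriction f)) := by
  have hswap := X_mul_diagonalRestriction_rightDerivation i j (rightDerivation (single j i 1) f)
  have hlie : rightDerivation (single i j 1) (rightDerivation (single j i 1) f) -
      rightDerivation (single j i 1) (rightDerivation (single i j 1) f) =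
        rightDerivation (single i i 1) f - rightDerivation (single j j 1) f := by
    rw [← Derivation.commutator_apply, lie_rightDerivation_rightDerivation, Ring.lie_def,
      single_mul_single_same, single_mul_single_same, one_mul, map_sub, Derivation.sub_apply]
  rw [leftDerivation_rightDerivation_comm, hf] at hswap
  have hdiag := congrArg diagonalRestriction hlie
  rw [map_sub, map_sub, ← eulerOp_diagonalRestriction, ← eulerOp_diagonalRestriction] at hdiag
  rw [← hdiag]
  linear_combination -hswap

theorem exists_diagonalRestriction_eq_C_mul_schurSum [IsDomain R] [CharZero R] {lam : Fin N → ℕ}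
    (hlam : Antitone lam) {f : MvPolynomial (Fin N × Fin N) R}
    (hinv : ∀ A, leftDerivation A f = rightDerivation A f)
    (hsymm : (diagonalRestriction f).IsSymmetric)
    (hdom : diagonalRestriction f ∈ dominatedSubmodule R lam) (hhom : f.IsHomogeneous (∑ i, lam i))
    (hcas : casimir f = casimirEigenvalue R lam • f) :
    ∃ c, diagonalRestriction f = C c * schurSum lam X := by
  refine exists_eq_C_mul_schurSum hlam hsymm hdom (isHomogeneous_aevalMatrix hhom fun i j ↦ ?_)
    (fun i j _ ↦ sub_mul_diagonalRestriction_rightDerivation hinv i j) ?_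
  · rw [diagonal_apply]
    split_ifs
    exacts [isHomogeneous_X R i, isHomogeneous_zero _ R 1]
  · have h := congrArg diagonalRestriction hcas
    rw [map_smul, smul_eq_C_mul] at h
    rw [← h, casimir_apply, map_sum, ← sum_add_distrib]
    refine sum_congr rfl fun i _ ↦ ?_
    rw [map_sum, Fintype.sum_eq_add_sum_compl i, eulerOp_diagonalRestriction,
      eulerOp_diagonalRestriction]

end CentralEigenvector

section DerivationDet

open Matrix

variable {n R A : Type*} [CommRing R] [CommRing A] [Algebra R A] (D : Derivation R A A)

theorem derivation_prod {ι : Type*} [DecidableEq ι] (s : Finset ι) (f : ι → A) :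
    D (∏ i ∈ s, f i) = ∑ j ∈ s, ∏ i ∈ s, Function.update f j (D (f j)) i := by
  induction s using Finset.induction_on with
  | empty => simp
  | insert a s ha ih =>
    have hs : ∏ i ∈ s, Function.update f a (D (f a)) i = ∏ i ∈ s, f i :=
      prod_congr rfl fun i hi ↦ Function.update_of_ne (ne_of_mem_of_not_mem hi ha) _ _
    have ha' (j : ι) (hj : j ∈ s) : ∏ i ∈ insert a s, Function.update f j (D (f j)) i =
        f a * ∏ i ∈ s, Function.update f j (D (f j)) i := by
      rw [prod_insert ha, Function.update_of_ne (ne_of_mem_of_not_mem hj ha).symm]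
    rw [sum_insert ha, sum_congr rfl ha', ← mul_sum, ← ih, prod_insert ha, prod_insert ha, hs,
      Function.update_self, Derivation.leibniz, smul_eq_mul, smul_eq_mul]
    ring

variable [Fintype n] [DecidableEq n]

theorem derivation_det (M : Matrix n n A) : D M.det = ∑ j, (M.updateCol j (D ∘ M.col j)).det := by
  have hprod (σ : Equiv.Perm n) : D (∏ i, M (σ i) i) =
      ∑ j, ∏ i, M.updateCol j (D ∘ M.col j) (σ i) i := by
    rw [derivation_prod]
    refine sum_congr rfl fun j _ ↦ prod_congr rfl fun i _ ↦ ?_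
    rw [updateCol_apply, Function.update_apply]
    split_ifs with hij
    · rw [hij]; rfl
    · rfl
  simp only [det_apply, map_sum, Derivation.map_smul_of_tower, hprod, smul_sum]
  exact sum_comm

theorem derivation_det_eq_trace_mul {M T : Matrix n n A} (h : M.map D = M * T) :
    D M.det = T.trace * M.det := by
  have hcol (j : n) : (M.updateCol j (D ∘ M.col j)).det = M.det * T j j := by
    have hj : D ∘ M.col j = M *ᵥ T.col j := funext fun i ↦ congrFun₂ h i j
    rw [hj, ← cramer_apply, cramer_eq_adjugate_mulVec, mulVec_mulVec, adjugate_mul, smul_mulVec,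
      one_mulVec, Pi.smul_apply, smul_eq_mul, col_apply]
  rw [derivation_det, sum_congr rfl fun j _ ↦ hcol j, ← mul_sum, mul_comm, trace]
  rfl

end DerivationDet

section LeadingMinors

open Matrix

variable {R : Type*} [CommRing R] {N : ℕ}

theorem toSquareBlockProp_mul_of_blockTriangular (M : Matrix (Fin N) (Fin N) R)
    {T : Matrix (Fin N) (Fin N) R} (hT : T.BlockTriangular id) (r : Fin N) :
    (M * T).toSquareBlockProp (· ≤ r) =
      M.toSquareBlockProp (· ≤ r) * T.toSquareBlockProp (· ≤ r) := by
  ext i j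
  rw [mul_apply]
  refine (sum_subset (subset_univ {k | k ≤ r}) fun k _ hk ↦ ?_).symm.trans
    (sum_subtype _ (fun k ↦ by simp) _)
  change M i k * T k j = 0
  rw [hT (j.2.trans_lt (not_le.1 fun h ↦ hk (mem_filter.2 ⟨mem_univ k, h⟩))), mul_zero]

/-- The product of powers of the leading principal minors of a matrix, with exponents `e`. -/
def leadingMinorProd (e : Fin N → ℕ) (M : Matrix (Fin N) (Fin N) R) : R :=
  ∏ r, (M.toSquareBlockProp (· ≤ r)).det ^ e r

theorem map_leadingMinorProd {S F : Type*} [CommRing S] [FunLike F R S] [RingHomClass F R S] (f : F)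
    (e : Fin N → ℕ) (M : Matrix (Fin N) (Fin N) R) :
    f (leadingMinorProd e M) = leadingMinorProd e (M.map f) := by
  rw [leadingMinorProd, map_prod]
  refine prod_congr rfl fun r _ ↦ ?_
  rw [map_pow]
  exact congrArg (· ^ e r) (RingHom.map_det (f : R →+* S) _)

theorem leadingMinorProd_one (e : Fin N → ℕ) :
    leadingMinorProd e (1 : Matrix (Fin N) (Fin N) R) = 1 := by
  refine prod_eq_one fun r _ ↦ ?_
  have hone : (1 : Matrix (Fin N) (Fin N) R).toSquareBlockProp (· ≤ r) = 1 :=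
    submatrix_one _ Subtype.val_injective
  rw [hone, det_one, one_pow]

/-- The highest weight of the representation generated by `leadingMinorProd e`. -/
def leadingMinorWeight (e : Fin N → ℕ) : Fin N → ℕ := ∑ r, e r • fun i ↦ if i ≤ r then 1 else 0

theorem leadingMinorWeight_apply (e : Fin N → ℕ) (i : Fin N) :
    leadingMinorWeight e i = ∑ r, if i ≤ r then e r else 0 := by
  simp [leadingMinorWeight]

theorem exists_leadingMinorWeight_eq {lam : Fin N → ℕ} (hlam : Antitone lam) :
    ∃ e, leadingMinorWeight e = lam := by
  induction N with
  | zero => exact ⟨0, Subsingleton.elim _ _⟩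
  | succ N ih =>
    obtain ⟨e, he⟩ := ih (hlam.comp_monotone Fin.strictMono_succ.monotone)
    have hle : ∑ r, e r ≤ lam 0 := by
      cases N with
      | zero => simp
      | succ N =>
        have h := congrFun he 0
        simp only [leadingMinorWeight_apply, Fin.zero_le, if_true] at h
        exact h.trans_le (hlam (Fin.zero_le _))
    refine ⟨Fin.cons (lam 0 - ∑ r, e r) e, funext (Fin.cases ?_ fun i ↦ ?_)⟩
    · simp [leadingMinorWeight_apply, Fin.sum_univ_succ, hle]
    · simpa [leadingMinorWeight_apply, Fin.sum_univ_succ] using congrFun he i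

theorem rightDerivation_leadingMinorProd (e : Fin N → ℕ) {T : Matrix (Fin N) (Fin N) R}
    (hT : T.BlockTriangular id) :
    rightDerivation T (leadingMinorProd e (mvPolynomialX (Fin N) (Fin N) R)) =
      C (∑ i, leadingMinorWeight e i • T i i) *
        leadingMinorProd e (mvPolynomialX (Fin N) (Fin N) R) := by
  have hminor (r : Fin N) :
      rightDerivation T ((mvPolynomialX (Fin N) (Fin N) R).toSquareBlockProp (· ≤ r)).det =
      C (T.toSquareBlockProp (· ≤ r)).trace *
        ((mvPolynomialX (Fin N) (Fin N) R).toSquareBlockProp (· ≤ r)).det := by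
    have hTC : (T.map (C : R →+* MvPolynomial (Fin N × Fin N) R)).BlockTriangular id :=
      fun i j hij ↦ by rw [map_apply, hT hij, C_0]
    have hX : ((mvPolynomialX (Fin N) (Fin N) R).toSquareBlockProp (· ≤ r)).map
        (rightDerivation T) = (mvPolynomialX (Fin N) (Fin N) R).toSquareBlockProp (· ≤ r) *
          (T.map C).toSquareBlockProp (· ≤ r) :=
      (congrArg (toSquareBlockProp · (· ≤ r)) (mvPolynomialX_map_rightDerivation T)).trans
        (toSquareBlockProp_mul_of_blockTriangular _ hTC r)
    rw [derivation_det_eq_trace_mul _ hX, trace, trace, map_sum]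
    rfl
  have hweight : ∑ i, leadingMinorWeight e i • T i i =
      ∑ r, e r • (T.toSquareBlockProp (· ≤ r)).trace := by
    simp only [leadingMinorWeight_apply, sum_smul, ite_smul, zero_smul]
    rw [sum_comm]
    refine sum_congr rfl fun r _ ↦ ?_
    rw [trace, smul_sum, ← sum_filter]
    exact sum_subtype _ (fun i ↦ by simp) _
  rw [leadingMinorProd, derivation_prod_eq_sum_mul _ _ fun r _ ↦
    derivation_pow_eq_nsmul_mul _ (hminor r) (e r), hweight, map_sum]
  simp only [map_nsmul]

theorem casimir_eq_smul_of_highestWeight {lam : Fin N → ℕ} {f : MvPolynomial (Fin N × Fin N) R}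
    (hraise : ∀ i j, i < j → rightDerivation (single i j 1) f = 0)
    (hweight : ∀ i, rightDerivation (single i i 1) f = C (lam i : R) * f) :
    casimir f = casimirEigenvalue R lam • f := by
  have hdiag (i : Fin N) : rightDerivation (single i i 1) (rightDerivation (single i i 1) f) =
      C ((lam i : R) ^ 2) * f := by
    rw [hweight, ← smul_eq_C_mul, Derivation.map_smul, hweight, smul_eq_C_mul, ← mul_assoc, ← C_mul,
      sq]
  have hlower {i j : Fin N} (hij : i < j) :
      rightDerivation (single i j 1) (rightDerivation (single j i 1) f) =
        C ((lam i : R) - lam j) * f := by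
    have h := congrArg (· f)
      (lie_rightDerivation_rightDerivation (single i j 1) (single j i (1 : R)))
    rwa [Derivation.commutator_apply, hraise i j hij, map_zero, sub_zero, Ring.lie_def,
      single_mul_single_same, single_mul_single_same, one_mul, map_sub, Derivation.sub_apply,
      hweight, hweight, ← sub_mul, ← C_sub] at h
  have hoff :
      ∑ i, ∑ j ∈ {i}ᶜ, rightDerivation (single j i 1) (rightDerivation (single i j 1) f) =
        ∑ i, ∑ j ∈ Ioi i, C ((lam i : R) - lam j) * f := by
    rw [← sum_sum_Ioi_add_eq_sum_sum_off_diag fun j i ↦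
      rightDerivation (single j i 1) (rightDerivation (single i j 1) f)]
    refine sum_congr rfl fun i _ ↦ sum_congr rfl fun j hj ↦ ?_
    rw [hraise i j (mem_Ioi.1 hj), map_zero, zero_add, hlower (mem_Ioi.1 hj)]
  rw [casimir_apply, sum_congr rfl fun i _ ↦ Fintype.sum_eq_add_sum_compl i _, sum_add_distrib,
    hoff, sum_congr rfl fun i _ ↦ hdiag i, casimirEigenvalue, smul_eq_C_mul]
  simp only [← sum_mul, ← map_sum, C_add, add_mul]

theorem casimir_leadingMinorProd (e : Fin N → ℕ) :
    casimir (leadingMinorProd e (mvPolynomialX (Fin N) (Fin N) R)) =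
      casimirEigenvalue R (leadingMinorWeight e) •
        leadingMinorProd e (mvPolynomialX (Fin N) (Fin N) R) := by
  have htri {i j : Fin N} (hij : i ≤ j) : (single i j (1 : R)).BlockTriangular id :=
    blockTriangular_single hij 1
  refine casimir_eq_smul_of_highestWeight (fun i j hij ↦ ?_) fun i ↦ ?_
  · rw [rightDerivation_leadingMinorProd e (htri hij.le), sum_eq_zero, C_0, zero_mul]
    intro k _
    rw [single_apply_of_ne, smul_zero]
    rintro ⟨rfl, rfl⟩
    exact hij.false
  · rw [rightDerivation_leadingMinorProd e (htri le_rfl), sum_eq_single i]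
    · rw [single_apply_same, nsmul_one]
    · intro k _ hk
      have hzero : single i i (1 : R) k k = 0 := single_apply_of_row_ne hk.symm _ _ _
      rw [hzero, smul_zero]
    · exact fun h ↦ absurd (mem_univ i) h

theorem isHomogeneous_leadingMinorProd (e : Fin N → ℕ) :
    (leadingMinorProd e (mvPolynomialX (Fin N) (Fin N) R)).IsHomogeneous
      (∑ i, leadingMinorWeight e i) := by
  have hdet (r : Fin N) : ((mvPolynomialX (Fin N) (Fin N) R).toSquareBlockProp
      (· ≤ r)).det.IsHomogeneous (∑ i, if i ≤ r then 1 else 0) := by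
    have hcard : ∑ i, (if i ≤ r then 1 else 0) = ∑ _i : {i // i ≤ r}, 1 := by
      rw [← sum_filter]
      exact sum_subtype _ (fun i ↦ by simp) _
    rw [det_apply, hcard]
    refine IsHomogeneous.sum _ _ _ fun σ _ ↦ (homogeneousSubmodule _ R _).smul_of_tower_mem _ ?_
    exact IsHomogeneous.prod _ _ _ fun i _ ↦ isHomogeneous_X _ _
  have hdeg : ∑ i, leadingMinorWeight e i = ∑ r, (∑ i, if i ≤ r then 1 else 0) * e r := by
    simp only [leadingMinorWeight_apply, sum_mul, ite_mul, one_mul, zero_mul]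
    exact sum_comm
  rw [hdeg]
  exact IsHomogeneous.prod _ _ _ fun r _ ↦ (hdet r).pow (e r)

theorem det_mul_eq_sum_det_submatrix {ι n : Type*} [Fintype ι] [Fintype n] [DecidableEq n]
    (P : Matrix n ι R) (Q : Matrix ι n R) :
    (P * Q).det = ∑ κ : n → ι, (∏ i, P i (κ i)) * (Q.submatrix κ id).det := by
  have hrows : P * Q = fun i ↦ ∑ k, P i k • Q k := by
    ext i j
    simp only [mul_apply, Finset.sum_apply, Pi.smul_apply, smul_eq_mul]
  have hsum := (detRowAlternating (R := R) (n := n)).toMultilinearMap.map_sum fun i k ↦ P i k • Q k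
  rw [hrows]
  refine hsum.trans (sum_congr rfl fun κ _ ↦ ?_)
  exact MultilinearMap.map_smul_univ _ _ _

theorem prod_X_comp_mem_dominatedSubmodule {r : Fin N} {κ : {i // i ≤ r} → Fin N}
    (hκ : Function.Injective κ) :
    ∏ i, X (κ i) ∈ dominatedSubmodule R fun i ↦ if i ≤ r then 1 else 0 := by
  let σ : Equiv.Perm (Fin N) := (Equiv.ofInjective κ hκ).extendSubtype
  have hσ (i : {i // i ≤ r}) : κ i = σ i :=
    ((Equiv.ofInjective κ hκ).extendSubtype_apply_of_mem i i.2).symm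
  have hanti : Antitone fun i ↦ if i ≤ r then 1 else 0 := fun i j hij ↦ by
    dsimp only
    split_ifs with hj hi
    exacts [le_rfl, absurd (hij.trans hj) hi, zero_le_one, le_rfl]
  have hprod : ∏ i, (X (κ i) : MvPolynomial (Fin N) R) =
      ∏ j, X j ^ (if σ.symm j ≤ r then 1 else 0) := by
    rw [← Equiv.prod_comp σ]
    simp only [Equiv.symm_apply_apply, pow_ite, pow_one, pow_zero, ← prod_filter, hσ]
    exact (prod_subtype _ (fun i ↦ by simp) fun i ↦ X (σ i)).symm
  have hmonomial : ∏ j, X j ^ (if σ.symm j ≤ r then 1 else 0) = monomial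
      (Finsupp.equivFunOnFinite.symm ((fun i ↦ if i ≤ r then 1 else 0) ∘ σ.symm)) (1 : R) := by
    rw [monomial_eq, C_1, one_mul, Finsupp.prod_fintype _ _ fun i ↦ pow_zero _]
    rfl
  rw [hprod, hmonomial]
  exact (monomial_mem_restrictSupport R).2 (.inl (isDominated_comp_perm hanti σ.symm))

theorem det_toSquareBlockProp_mem_dominatedSubmodule (A B : Matrix (Fin N) (Fin N) R) (r : Fin N) :
    ((A.map C * diagonal X * B.map C).toSquareBlockProp (· ≤ r)).det ∈
      dominatedSubmodule R fun i ↦ if i ≤ r then 1 else 0 := by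
  let val : {i // i ≤ r} → Fin N := Subtype.val
  have hexpand := det_mul_eq_sum_det_submatrix
    ((A.map C * diagonal X : Matrix _ _ (MvPolynomial (Fin N) R)).submatrix val id)
    ((B.submatrix id val).map C)
  refine hexpand ▸ Submodule.sum_mem _ fun κ _ ↦ ?_
  have hdet : (((B.submatrix id val).map C).submatrix κ id).det =
      (C ((B.submatrix κ val).det) : MvPolynomial (Fin N) R) :=
    (RingHom.map_det C (B.submatrix κ val)).symm
  have hprod : ∏ i, (A.map C * diagonal X : Matrix _ _ _).submatrix val id i (κ i) =
      (C (∏ i, A (val i) (κ i)) * ∏ i, X (κ i) : MvPolynomial (Fin N) R) := by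
    simp only [submatrix_apply, mul_diagonal, map_apply, id, prod_mul_distrib, map_prod]
  rw [hdet, hprod, mul_right_comm, ← C_mul, ← smul_eq_C_mul]
  by_cases hκ : Function.Injective κ
  · exact Submodule.smul_mem _ _ (prod_X_comp_mem_dominatedSubmodule hκ)
  · obtain ⟨i, j, hij, hne⟩ := Function.not_injective_iff.1 hκ
    have hzero : (B.submatrix κ val).det = 0 :=
      det_zero_of_row_eq hne (funext fun _ ↦ by rw [submatrix_apply, submatrix_apply, hij])
    rw [hzero, mul_zero, zero_smul]
    exact Submodule.zero_mem _

theorem leadingMinorProd_mem_dominatedSubmodule (e : Fin N → ℕ) (A B : Matrix (Fin N) (Fin N) R) :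
    leadingMinorProd e (A.map C * diagonal X * B.map C) ∈
      dominatedSubmodule R (leadingMinorWeight e) :=
  prod_mem_dominatedSubmodule _ fun r _ ↦
    pow_mem_dominatedSubmodule (det_toSquareBlockProp_mem_dominatedSubmodule A B r) (e r)

end LeadingMinors

section UnitaryInvariance

open Matrix

theorem hasDerivAt_aeval {σ R 𝕜 𝔸 : Type*} [CommRing R] [NontriviallyNormedField 𝕜]
    [NormedCommRing 𝔸] [NormedAlgebra 𝕜 𝔸] [Algebra R 𝔸] {γ : 𝕜 → σ → 𝔸} {t : 𝕜}
    {D : Derivation R (MvPolynomial σ R) (MvPolynomial σ R)}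
    (h : ∀ p, HasDerivAt (fun s ↦ γ s p) (aeval (γ t) (D (X p))) t) (f : MvPolynomial σ R) :
    HasDerivAt (fun s ↦ aeval (γ s) f) (aeval (γ t) (D f)) t := by
  induction f using MvPolynomial.induction_on with
  | C r => simpa only [aeval_C, derivation_C, map_zero] using hasDerivAt_const t _
  | add f₁ f₂ h₁ h₂ => simpa only [map_add] using h₁.fun_add h₂
  | mul_X f p hf =>
    simpa only [map_mul, aeval_X, Derivation.leibniz, smul_eq_mul, map_add, add_comm, mul_comm]
      using hf.fun_mul (h p)

variable {n : Type*} [Fintype n]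

theorem aevalMatrix_leftDerivation_X {R : Type*} [CommRing R] (A M : Matrix n n R) (p : n × n) :
    aevalMatrix M (leftDerivation A (X p)) = (A * M) p.1 p.2 := by
  simp only [leftDerivation, matrixDerivation, LinearMap.coe_mk, AddHom.coe_mk, mkDerivation_X,
    aevalMatrix, mul_apply, map_apply, mvPolynomialX_apply, map_sum, map_mul, aeval_X, algHom_C,
    Algebra.algebraMap_self_apply]

theorem aevalMatrix_rightDerivation_X {R : Type*} [CommRing R] (A M : Matrix n n R) (p : n × n) :
    aevalMatrix M (rightDerivation A (X p)) = (M * A) p.1 p.2 := by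
  simp only [rightDerivation, matrixDerivation, LinearMap.coe_mk, AddHom.coe_mk, mkDerivation_X,
    aevalMatrix, mul_apply, map_apply, mvPolynomialX_apply, map_sum, map_mul, aeval_X, algHom_C,
    Algebra.algebraMap_self_apply]

variable [DecidableEq n]

/-- Invariance of a polynomial in the matrix entries under conjugation by unitary matrices. -/
def IsUnitaryConjInvariant (f : MvPolynomial (n × n) ℂ) : Prop :=
  ∀ (U : unitaryGroup n ℂ) (M : Matrix n n ℂ),
    aevalMatrix ((U : Matrix n n ℂ) * M * star (U : Matrix n n ℂ)) f = aevalMatrix M f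

theorem hasDerivAt_exp_smul_mul_mul_exp_smul_neg_apply (A M : Matrix n n ℂ) (i j : n) :
    HasDerivAt (fun t : ℝ ↦ (NormedSpace.exp (t • A) * M * NormedSpace.exp (t • -A)) i j)
      ((A * M - M * A) i j) 0 := by
  open scoped Matrix.Norms.Operator in
  have h := ((hasDerivAt_exp_smul_const A (0 : ℝ)).mul_const M).fun_mul
    (hasDerivAt_exp_smul_const (-A) (0 : ℝ))
  simp only [zero_smul, NormedSpace.exp_zero, one_mul, mul_one, mul_neg, ← sub_eq_add_neg] at h
  exact hasDerivAt_pi.1 (hasDerivAt_pi.1 h i) j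

theorem leftDerivation_eq_rightDerivation_of_mem_skewAdjoint {f : MvPolynomial (n × n) ℂ}
    (hf : IsUnitaryConjInvariant f) {A : Matrix n n ℂ} (hA : A ∈ skewAdjoint (Matrix n n ℂ)) :
    leftDerivation A f = rightDerivation A f := by
  refine sub_eq_zero.1 (MvPolynomial.funext fun x ↦ ?_)
  let M : Matrix n n ℂ := fun i j ↦ x (i, j)
  let γ (t : ℝ) : Matrix n n ℂ := NormedSpace.exp (t • A) * M * NormedSpace.exp (t • -A)
  have hγ (t : ℝ) : aevalMatrix (γ t) f = aevalMatrix M f := by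
    have hstar : star (NormedSpace.exp (t • A)) = NormedSpace.exp (t • -A) := by
      rw [star_eq_conjTranspose, ← exp_conjTranspose, ← star_eq_conjTranspose, star_smul,
        star_trivial, skewAdjoint.mem_iff.1 hA]
    have hmem : NormedSpace.exp (t • A) ∈ unitaryGroup n ℂ := by
      rw [mem_unitaryGroup_iff, hstar, smul_neg,
        ← exp_add_of_commute _ _ (Commute.refl (t • A)).neg_right, add_neg_cancel,
        NormedSpace.exp_zero]
    rw [← hf ⟨_, hmem⟩ M, hstar]
  have hγ0 : γ 0 = M := by
    simp only [γ, zero_smul, NormedSpace.exp_zero, one_mul, mul_one]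
  have hderiv : HasDerivAt (fun t ↦ aevalMatrix (γ t) f)
      (aevalMatrix (γ 0) ((leftDerivation A - rightDerivation A) f)) 0 := by
    refine hasDerivAt_aeval (fun p ↦ ?_) f
    have hX : aevalMatrix (γ 0) ((leftDerivation A - rightDerivation A) (X p)) =
        (A * M - M * A) p.1 p.2 := by
      rw [Derivation.sub_apply, map_sub, aevalMatrix_leftDerivation_X,
        aevalMatrix_rightDerivation_X, hγ0, Matrix.sub_apply]
    exact hX ▸ hasDerivAt_exp_smul_mul_mul_exp_smul_neg_apply A M p.1 p.2
  simp only [hγ, hγ0] at hderiv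
  exact hderiv.unique (hasDerivAt_const _ _)

theorem leftDerivation_eq_rightDerivation {f : MvPolynomial (n × n) ℂ}
    (hf : IsUnitaryConjInvariant f) (A : Matrix n n ℂ) :
    leftDerivation A f = rightDerivation A f := by
  have h (B : selfAdjoint (Matrix n n ℂ)) :
      leftDerivation (B : Matrix n n ℂ) f = rightDerivation (B : Matrix n n ℂ) f := by
    have hB : Complex.I • (B : Matrix n n ℂ) ∈ skewAdjoint (Matrix n n ℂ) := by
      rw [skewAdjoint.mem_iff, star_smul, B.2.star_eq, Complex.star_def, Complex.conj_I, neg_smul]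
    have h := leftDerivation_eq_rightDerivation_of_mem_skewAdjoint hf hB
    rw [map_smul, map_smul, Derivation.smul_apply, Derivation.smul_apply] at h
    exact smul_right_injective _ Complex.I_ne_zero h
  rw [← realPart_add_I_smul_imaginaryPart A]
  simp only [map_add, map_smul, Derivation.add_apply, Derivation.smul_apply, h]

theorem isSymmetric_diagonalRestriction {f : MvPolynomial (n × n) ℂ}
    (hf : IsUnitaryConjInvariant f) : (diagonalRestriction f).IsSymmetric := by
  intro σ
  refine MvPolynomial.funext fun x ↦ ?_
  have hconj : σ.permMatrix ℂ * diagonal x * star (σ.permMatrix ℂ) = diagonal (x ∘ σ) := by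
    ext i j
    rw [star_eq_conjTranspose, conjTranspose_permMatrix, PEquiv.toMatrix_toPEquiv_mul,
      PEquiv.mul_toMatrix_toPEquiv, submatrix_submatrix]
    exact congrFun₂ (submatrix_diagonal_equiv x σ) i j
  have hσ : σ.permMatrix ℂ ∈ unitaryGroup n ℂ := by
    rw [mem_unitaryGroup_iff, star_eq_conjTranspose, conjTranspose_permMatrix, ← permMatrix_mul,
      inv_mul_cancel, permMatrix_one]
  rw [eval_rename, eval_diagonalRestriction, eval_diagonalRestriction, ← hconj]
  exact hf ⟨_, hσ⟩ _

end UnitaryInvariance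

section MatrixCoefficients

open Matrix

variable {R : Type*} [CommRing R] {N : ℕ}

variable (R) in
/-- The polynomials in the matrix entries that are homogeneous of degree `∑ λᵢ`, have the Casimir
eigenvalue of `λ` and, restricted to the matrices `A D B` with `D` diagonal, only involve weights
dominated by `λ`. It contains the matrix coefficients of the irreducible representation of highest
weight `λ`. -/
noncomputable def matrixCoeffSubmodule (lam : Fin N → ℕ) :
    Submodule R (MvPolynomial (Fin N × Fin N) R) :=
  homogeneousSubmodule _ R (∑ i, lam i) ⊓
    Module.End.eigenspace casimir (casimirEigenvalue R lam) ⊓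
    ⨅ (A : Matrix (Fin N) (Fin N) R) (B : Matrix (Fin N) (Fin N) R),
      (dominatedSubmodule R lam).comap (aevalMatrix (A.map C * diagonal X * B.map C)).toLinearMap

theorem mem_matrixCoeffSubmodule {lam : Fin N → ℕ} {f : MvPolynomial (Fin N × Fin N) R} :
    f ∈ matrixCoeffSubmodule R lam ↔ (f.IsHomogeneous (∑ i, lam i) ∧
      casimir f = casimirEigenvalue R lam • f) ∧ ∀ A B : Matrix (Fin N) (Fin N) R,
        aevalMatrix (A.map C * diagonal X * B.map C) f ∈ dominatedSubmodule R lam := by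
  simp only [matrixCoeffSubmodule, Submodule.mem_inf, Submodule.mem_iInf, Submodule.mem_comap,
    mem_homogeneousSubmodule, Module.End.mem_eigenspace_iff, AlgHom.toLinearMap_apply]

theorem leadingMinorProd_mem_matrixCoeffSubmodule (e : Fin N → ℕ) :
    leadingMinorProd e (mvPolynomialX (Fin N) (Fin N) R) ∈
      matrixCoeffSubmodule R (leadingMinorWeight e) := by
  refine mem_matrixCoeffSubmodule.2
    ⟨⟨isHomogeneous_leadingMinorProd e, casimir_leadingMinorProd e⟩, fun A B ↦ ?_⟩
  rw [map_leadingMinorProd, mvPolynomialX_map_aevalMatrix]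
  exact leadingMinorProd_mem_dominatedSubmodule e A B

theorem sandwich_mem_matrixCoeffSubmodule {lam : Fin N → ℕ} {f : MvPolynomial (Fin N × Fin N) R}
    (hf : f ∈ matrixCoeffSubmodule R lam) (A : Matrix (Fin N) (Fin N) R)
    {B B' : Matrix (Fin N) (Fin N) R} (hB : B * B' = 1) :
    sandwich A B f ∈ matrixCoeffSubmodule R lam := by
  obtain ⟨⟨hhom, hcas⟩, hdom⟩ := mem_matrixCoeffSubmodule.1 hf
  refine mem_matrixCoeffSubmodule.2 ⟨⟨isHomogeneous_aevalMatrix hhom fun i j ↦ ?_, ?_⟩,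
    fun A₁ B₁ ↦ ?_⟩
  · rw [mul_apply]
    refine IsHomogeneous.sum _ _ _ fun k _ ↦ ?_
    rw [mul_apply, ← add_zero 1]
    refine (IsHomogeneous.sum _ _ _ fun l _ ↦ ?_).mul (isHomogeneous_C _ _)
    rw [← zero_add 1]
    exact (isHomogeneous_C _ _).mul (isHomogeneous_X R (l, k))
  · rw [casimir_sandwich A hB, hcas, map_smul]
  · have h := hdom (A * A₁) (B₁ * B)
    rw [Matrix.map_mul, Matrix.map_mul] at h
    rw [aevalMatrix_sandwich, algebraMap_eq]
    simpa only [mul_assoc] using h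

theorem exists_aevalMatrix_diagonal_eq_mul_schurSum {lam : Fin N → ℕ} (hlam : Antitone lam)
    {f : MvPolynomial (Fin N × Fin N) ℂ} (hf : f ∈ matrixCoeffSubmodule ℂ lam)
    (hinv : IsUnitaryConjInvariant f) :
    ∃ c, ∀ x : Fin N → ℂ, aevalMatrix (diagonal x) f = c * schurSum lam x := by
  obtain ⟨⟨hhom, hcas⟩, hdom⟩ := mem_matrixCoeffSubmodule.1 hf
  have hdiag : diagonalRestriction f ∈ dominatedSubmodule ℂ lam := by
    have h := hdom 1 1
    rwa [Matrix.map_one _ (map_zero C) (map_one C), one_mul, mul_one] at h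
  obtain ⟨c, hc⟩ := exists_diagonalRestriction_eq_C_mul_schurSum hlam
    (leftDerivation_eq_rightDerivation hinv) (isSymmetric_diagonalRestriction hinv) hdiag hhom hcas
  refine ⟨c, fun x ↦ ?_⟩
  rw [← eval_diagonalRestriction, hc, map_mul, eval_C, map_schurSum]
  congr 2
  exact funext fun i ↦ eval_X i

end MatrixCoefficients

section Averaging

open Matrix

theorem exists_forall_dual_eq_integral {𝕜 E G : Type*} [RCLike 𝕜] [AddCommGroup E] [Module 𝕜 E]
    [FiniteDimensional 𝕜 E] [MeasurableSpace G] {μ : Measure G} {Φ : Set (Module.Dual 𝕜 E)}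
    (hΦ : ∀ v ≠ 0, ∃ φ ∈ Φ, φ v ≠ 0) {F : G → E}
    (hF : ∀ φ ∈ Φ, Integrable (fun g ↦ φ (F g)) μ) :
    ∃ v, ∀ φ : Module.Dual 𝕜 E, φ v = ∫ g, φ (F g) ∂μ := by
  have hint (φ : Module.Dual 𝕜 E) : Integrable (fun g ↦ φ (F g)) μ := by
    have hφ : φ ∈ Submodule.span 𝕜 Φ := by rw [Submodule.span_eq_top_of_ne_zero hΦ]; trivial
    induction hφ using Submodule.span_induction with
    | mem φ hφ => exact hF φ hφ
    | zero => exact integrable_zero G 𝕜 μ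
    | add φ ψ _ _ hφ hψ => exact hφ.add hψ
    | smul c φ _ hφ => exact hφ.smul c
  let b := Module.finBasis 𝕜 E
  refine ⟨∑ i, (∫ g, b.coord i (F g) ∂μ) • b i, fun φ ↦ ?_⟩
  have hsum (g : G) : φ (F g) = ∑ i, b.coord i (F g) * φ (b i) := by
    conv_lhs => rw [← b.sum_repr (F g), map_sum]
    exact sum_congr rfl fun i _ ↦ map_smul φ _ _
  simp only [hsum, map_sum, map_smul, smul_eq_mul]
  rw [integral_finsetSum _ fun i _ ↦ (hint _).mul_const _]
  exact sum_congr rfl fun i _ ↦ (integral_mul_const _ _).symm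

theorem exists_mem_forall_aevalMatrix_eq_integral {n 𝕜 G : Type*} [RCLike 𝕜]
    [MeasurableSpace G] {μ : Measure G} {H : Submodule 𝕜 (MvPolynomial (n × n) 𝕜)}
    [FiniteDimensional 𝕜 H] {F : G → MvPolynomial (n × n) 𝕜} (hFH : ∀ g, F g ∈ H)
    (hF : ∀ M : Matrix n n 𝕜, Integrable (fun g ↦ aevalMatrix M (F g)) μ) :
    ∃ f ∈ H, ∀ M : Matrix n n 𝕜, aevalMatrix M f = ∫ g, aevalMatrix M (F g) ∂μ := by
  let ev (M : Matrix n n 𝕜) : Module.Dual 𝕜 H := (aevalMatrix M).toLinearMap ∘ₗ H.subtype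
  have hev (v : H) (hv : v ≠ 0) : ∃ φ ∈ Set.range ev, φ v ≠ 0 := by
    contrapose! hv
    refine Subtype.ext (MvPolynomial.funext fun x ↦ ?_)
    exact hv _ ⟨fun i j ↦ x (i, j), rfl⟩
  obtain ⟨f, hf⟩ := exists_forall_dual_eq_integral hev (F := fun g ↦ ⟨F g, hFH g⟩) (μ := μ)
    (by rintro _ ⟨M, rfl⟩; exact hF M)
  exact ⟨f, f.2, fun M ↦ hf (ev M)⟩

instance compactSpace_unitaryGroup {n 𝕜 : Type*} [Fintype n] [DecidableEq n] [RCLike 𝕜] :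
    CompactSpace (unitaryGroup n 𝕜) := by
  refine isCompact_iff_compactSpace.1 (IsCompact.of_isClosed_subset (isCompact_univ_pi fun _ : n ↦
    isCompact_univ_pi fun _ : n ↦ isCompact_closedBall (0 : 𝕜) 1) isClosed_unitary ?_)
  intro A hA i _ j _
  rw [mem_closedBall_zero_iff]
  exact entry_norm_bound_of_unitary hA i j

instance borelSpace_unitaryGroup {n 𝕜 : Type*} [Fintype n] [DecidableEq n] [RCLike 𝕜] :
    BorelSpace (unitaryGroup n 𝕜) :=
  have : BorelSpace (Matrix n n 𝕜) := ⟨rfl⟩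
  Subtype.borelSpace _

end Averaging

section Diagonalization

open Matrix

theorem exists_eq_mul_diagonal_mul_star {n : Type*} [Fintype n] [DecidableEq n] {M : Matrix n n ℂ}
    (hM : IsStarNormal M) : ∃ (S : unitaryGroup n ℂ) (x : n → ℂ),
      M = (S : Matrix n n ℂ) * diagonal x * star (S : Matrix n n ℂ) := by
  open scoped Matrix.Norms.L2Operator in
  -- Any injection into `ℝ` separates the finite spectrum, on which it is automatically continuous,
  -- so `M` is a polynomial in a self-adjoint matrix.
  obtain ⟨e⟩ : Nonempty (ℂ ≃ ℝ) := Cardinal.eq.1 (Cardinal.mk_complex.trans Cardinal.mk_real.symm)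
  let g (z : ℂ) : ℂ := e z
  have hg : g.Injective := Complex.ofReal_injective.comp e.injective
  let A := cfc g M
  have hA : A.IsHermitian := by
    rw [IsHermitian, ← star_eq_conjTranspose, ← cfc_star]
    exact cfc_congr fun z _ ↦ Complex.conj_ofReal (e z)
  obtain ⟨p, hp⟩ : ∃ p, Polynomial.aeval A p = M := by
    refine ⟨Lagrange.interpolate M.finite_spectrum.toFinset g id, ?_⟩
    rw [← cfc_map_polynomial _ _ _ (hf := M.finite_spectrum.continuousOn _)]
    refine (cfc_congr fun z hz ↦ ?_).trans (cfc_id ℂ M)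
    exact Lagrange.eval_interpolate_at_node _ hg.injOn (M.finite_spectrum.mem_toFinset.2 hz)
  refine ⟨hA.eigenvectorUnitary, Polynomial.aeval (RCLike.ofReal ∘ hA.eigenvalues) p, ?_⟩
  rw [← Unitary.conjStarAlgAut_apply (S := ℂ), ← diagonalAlgHom_apply (R := ℂ),
    ← Polynomial.aeval_algHom_apply, ← Polynomial.aeval_algHom_apply, diagonalAlgHom_apply,
    ← hA.spectral_theorem, hp]

theorem roots_charpoly_mul_diagonal_mul_star {n R : Type*} [Fintype n] [DecidableEq n]
    [CommRing R] [IsDomain R] [StarRing R] (S : unitaryGroup n R) (x : n → R) :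
    ((S : Matrix n n R) * diagonal x * star (S : Matrix n n R)).charpoly.roots =
      univ.val.map x := by
  rw [charpoly_mul_comm, ← mul_assoc, mem_unitaryGroup_iff'.1 S.2, one_mul, charpoly_diagonal,
    ← Polynomial.roots_multiset_prod_X_sub_C (univ.val.map x), Multiset.map_map]
  rfl

theorem exists_comp_perm_eq_of_map_univ_val_eq {ι α : Type*} [Fintype ι] {f g : ι → α}
    (h : univ.val.map f = univ.val.map g) : ∃ σ : Equiv.Perm ι, g ∘ σ = f := by
  classical
  have hcard (c : α) : Fintype.card {i // f i = c} = Fintype.card {i // g i = c} := by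
    have hc := congrArg (Multiset.count c) h
    simp only [Multiset.count_map, ← Finset.filter_val, Finset.card_val] at hc
    simpa only [Fintype.card_subtype, eq_comm] using hc
  exact ⟨Equiv.ofFiberEquiv fun c ↦ Fintype.equivOfCardEq (hcard c),
    funext fun i ↦ Equiv.ofFiberEquiv_map _ i⟩

theorem schurMat_eq_schurSum {N : ℕ} {lam : Fin N → ℕ} (hlam : Antitone lam)
    {M : Matrix (Fin N) (Fin N) ℂ} {x : Fin N → ℂ} (hM : M.charpoly.roots = univ.val.map x) :
    schurMat N lam M = schurSum lam x := by
  let l := M.charpoly.roots.toList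
  have hl : l.length = N := by
    rw [Multiset.length_toList, hM, Multiset.card_map, Finset.card_val, Finset.card_univ,
      Fintype.card_fin]
  have hofFn : List.ofFn (fun i : Fin N ↦ l.getD i 0) = l := by
    refine List.ext_getElem (List.length_ofFn.trans hl.symm) fun i _ hi ↦ ?_
    rw [List.getElem_ofFn, List.getD_eq_getElem l 0 hi]
  obtain ⟨σ, hσ⟩ := exists_comp_perm_eq_of_map_univ_val_eq (g := x)
    (f := fun i : Fin N ↦ l.getD i 0) (by rw [Fin.univ_val_map, hofFn, Multiset.coe_toList, hM])
  rw [schurMat, schur_eq_schurSum, ← hσ, schurSum_comp_perm hlam]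

theorem schurMat_one {N : ℕ} {lam : Fin N → ℕ} (hlam : Antitone lam) :
    schurMat N lam 1 = schur N lam fun _ ↦ (1 : ℂ) := by
  rw [schur_eq_schurSum]
  refine schurMat_eq_schurSum hlam ?_
  simpa only [OneMemClass.coe_one, star_one, one_mul, mul_one, diagonal_one] using
    roots_charpoly_mul_diagonal_mul_star (1 : unitaryGroup (Fin N) ℂ) (fun _ ↦ 1)

end Diagonalization

section HaarAverages

open Matrix

variable {N : ℕ} {lam : Fin N → ℕ}

instance finiteDimensional_matrixCoeffSubmodule {𝕜 : Type*} [Field 𝕜] :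
    FiniteDimensional 𝕜 (matrixCoeffSubmodule 𝕜 lam) :=
  have : FiniteDimensional 𝕜 (homogeneousSubmodule (Fin N × Fin N) 𝕜 (∑ i, lam i)) :=
    Module.Finite.iff_fg.2 (homogeneousSubmodule_fg _ _ _)
  Submodule.finiteDimensional_of_le (inf_le_left.trans inf_le_left)

theorem coe_star_mul_cancel_left {R : Type*} [Monoid R] [StarMul R] (U : unitary R) (x : R) :
    star (U : R) * (U * x) = x := by
  rw [← mul_assoc, Unitary.coe_star_mul_self, one_mul]

theorem exists_aevalMatrix_eq_mul_schurMat (hlam : Antitone lam)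
    {f : MvPolynomial (Fin N × Fin N) ℂ} (hf : f ∈ matrixCoeffSubmodule ℂ lam)
    (hinv : IsUnitaryConjInvariant f) :
    ∃ c, ∀ M : Matrix (Fin N) (Fin N) ℂ, IsStarNormal M →
      aevalMatrix M f = c * schurMat N lam M := by
  obtain ⟨c, hc⟩ := exists_aevalMatrix_diagonal_eq_mul_schurSum hlam hf hinv
  refine ⟨c, fun M hM ↦ ?_⟩
  obtain ⟨S, x, rfl⟩ := exists_eq_mul_diagonal_mul_star hM
  rw [hinv, hc, schurMat_eq_schurSum hlam (roots_charpoly_mul_diagonal_mul_star S x)]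

theorem continuous_aevalMatrix {n R : Type*} [CommRing R] [TopologicalSpace R]
    [IsTopologicalSemiring R] (f : MvPolynomial (n × n) R) :
    Continuous fun M : Matrix n n R ↦ aevalMatrix M f :=
  f.continuous_eval.comp (by fun_prop : Continuous fun (M : Matrix n n R) (p : n × n) ↦ M p.1 p.2)

theorem exists_mem_matrixCoeffSubmodule_aevalMatrix_eq_integral {G : Type*} [TopologicalSpace G]
    [CompactSpace G] [MeasurableSpace G] [BorelSpace G] {m : Measure G}
    [IsFiniteMeasureOnCompacts m] {f : MvPolynomial (Fin N × Fin N) ℂ}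
    (hf : f ∈ matrixCoeffSubmodule ℂ lam) {A B : G → Matrix (Fin N) (Fin N) ℂ} (hA : Continuous A)
    (hB : Continuous B) (hunit : ∀ U, IsUnit (B U)) :
    ∃ g ∈ matrixCoeffSubmodule ℂ lam, ∀ M : Matrix (Fin N) (Fin N) ℂ,
      aevalMatrix M g = ∫ U, aevalMatrix (A U * M * B U) f ∂m := by
  have hsandwich (U : G) (M : Matrix (Fin N) (Fin N) ℂ) :
      aevalMatrix M (sandwich (A U) (B U) f) = aevalMatrix (A U * M * B U) f :=
    aevalMatrix_sandwich M (A U) (B U) f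
  simp only [← hsandwich]
  refine exists_mem_forall_aevalMatrix_eq_integral
    (fun U ↦ sandwich_mem_matrixCoeffSubmodule hf (A U) (hunit U).exists_right_inv.choose_spec)
    fun M ↦ ?_
  simp only [hsandwich]
  have hcont : Continuous fun U ↦ aevalMatrix (A U * M * B U) f :=
    (continuous_aevalMatrix f).comp (by fun_prop)
  exact hcont.integrable_of_hasCompactSupport (HasCompactSupport.of_compactSpace _)

variable (m : Measure (unitaryGroup (Fin N) ℂ)) [m.IsHaarMeasure]

theorem exists_isUnitaryConjInvariant_aevalMatrix_one [IsProbabilityMeasure m]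
    (hlam : Antitone lam) :
    ∃ f ∈ matrixCoeffSubmodule ℂ lam, IsUnitaryConjInvariant f ∧
      aevalMatrix (1 : Matrix (Fin N) (Fin N) ℂ) f = 1 := by
  obtain ⟨e, rfl⟩ := exists_leadingMinorWeight_eq hlam
  obtain ⟨f, hf, hfm⟩ := exists_mem_matrixCoeffSubmodule_aevalMatrix_eq_integral (m := m)
    (leadingMinorProd_mem_matrixCoeffSubmodule e)
    (A := fun U : unitaryGroup (Fin N) ℂ ↦ star (U : Matrix (Fin N) (Fin N) ℂ)) (by fun_prop)
    continuous_subtype_val fun U ↦ Unitary.isUnit_coe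
  refine ⟨f, hf, fun S M ↦ ?_, ?_⟩
  · have hconj (U : unitaryGroup (Fin N) ℂ) :
        star ((S * U : unitaryGroup (Fin N) ℂ) : Matrix (Fin N) (Fin N) ℂ) *
            ((S : Matrix (Fin N) (Fin N) ℂ) * M * star (S : Matrix (Fin N) (Fin N) ℂ)) *
            (S * U : unitaryGroup (Fin N) ℂ) =
          star (U : Matrix (Fin N) (Fin N) ℂ) * M * U := by
      simp only [Submonoid.coe_mul, star_mul, mul_assoc, coe_star_mul_cancel_left]
    rw [hfm, hfm, ← integral_mul_left_eq_self _ S]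
    simp only [hconj]
  · rw [hfm]
    simp only [mul_one, Unitary.coe_star_mul_self, map_leadingMinorProd,
      mvPolynomialX_map_aevalMatrix, leadingMinorProd_one, integral_const, probReal_univ, one_smul]

theorem exists_isUnitaryConjInvariant_aevalMatrix_eq_integral
    {f : MvPolynomial (Fin N × Fin N) ℂ} (hf : f ∈ matrixCoeffSubmodule ℂ lam)
    (hinv : IsUnitaryConjInvariant f) (V : Matrix (Fin N) (Fin N) ℂ) :
    ∃ g ∈ matrixCoeffSubmodule ℂ lam, IsUnitaryConjInvariant g ∧
      ∀ M : Matrix (Fin N) (Fin N) ℂ, aevalMatrix M g =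
        ∫ U, aevalMatrix ((U : Matrix (Fin N) (Fin N) ℂ) * V *
          star (U : Matrix (Fin N) (Fin N) ℂ) * M) f ∂m := by
  obtain ⟨g, hg, hgm⟩ := exists_mem_matrixCoeffSubmodule_aevalMatrix_eq_integral (m := m) hf
    (A := fun U : unitaryGroup (Fin N) ℂ ↦
      (U : Matrix (Fin N) (Fin N) ℂ) * V * star (U : Matrix (Fin N) (Fin N) ℂ)) (by fun_prop)
    (continuous_const (y := 1)) fun _ ↦ isUnit_one
  simp only [mul_one] at hgm
  refine ⟨g, hg, fun S M ↦ ?_, hgm⟩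
  have hconj (U : unitaryGroup (Fin N) ℂ) :
      (S * U : unitaryGroup (Fin N) ℂ) * V *
          star ((S * U : unitaryGroup (Fin N) ℂ) : Matrix (Fin N) (Fin N) ℂ) *
          ((S : Matrix (Fin N) (Fin N) ℂ) * M * star (S : Matrix (Fin N) (Fin N) ℂ)) =
        (S : Matrix (Fin N) (Fin N) ℂ) * ((U : Matrix (Fin N) (Fin N) ℂ) * V *
          star (U : Matrix (Fin N) (Fin N) ℂ) * M) * star (S : Matrix (Fin N) (Fin N) ℂ) := by
    simp only [Submonoid.coe_mul, star_mul, mul_assoc, coe_star_mul_cancel_left]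
  rw [hgm, hgm, ← integral_mul_left_eq_self _ S]
  simp only [hconj, hinv S]

end HaarAverages

/-- **Schur orthogonality on the unitary group.**
`∫_{U(N)} s_λ(U V U⋆ W) dm_N(U) = s_λ(V) s_λ(W) / d_λ` with `d_λ = s_λ(1, …, 1)`. -/
theorem schur_orthogonality (N : ℕ) (hN : 0 < N) (lam : Fin N → ℕ) (hlam : Antitone lam)
    (m : Measure (Matrix.unitaryGroup (Fin N) ℂ))
    [m.IsHaarMeasure] [IsProbabilityMeasure m]
    (V W : Matrix.unitaryGroup (Fin N) ℂ) :
    (∫ U, schurMat N lam ((U : Matrix (Fin N) (Fin N) ℂ) * (V : Matrix (Fin N) (Fin N) ℂ) *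
        star (U : Matrix (Fin N) (Fin N) ℂ) * (W : Matrix (Fin N) (Fin N) ℂ)) ∂m)
      = schurMat N lam (V : Matrix (Fin N) (Fin N) ℂ) *
          schurMat N lam (W : Matrix (Fin N) (Fin N) ℂ) /
          schur N lam (fun _ => (1 : ℂ)) := by
  obtain ⟨f, hf, hfinv, hf1⟩ := exists_isUnitaryConjInvariant_aevalMatrix_one m hlam
  obtain ⟨g, hg, hginv, hgV⟩ := exists_isUnitaryConjInvariant_aevalMatrix_eq_integral m hf hfinv V
  obtain ⟨c, hc⟩ := exists_aevalMatrix_eq_mul_schurMat hlam hf hfinv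
  obtain ⟨b, hb⟩ := exists_aevalMatrix_eq_mul_schurMat hlam hg hginv
  have hcd : c * schur N lam (fun _ ↦ (1 : ℂ)) = 1 := by
    rw [← schurMat_one hlam, ← hc 1 inferInstance, hf1]
  have hbd : b * schur N lam (fun _ ↦ (1 : ℂ)) = c * schurMat N lam V := by
    rw [← schurMat_one hlam, ← hb 1 inferInstance, ← hc V inferInstance, hgV]
    simp only [mul_one, hfinv _ (V : Matrix (Fin N) (Fin N) ℂ), integral_const, probReal_univ,
      one_smul]
  have hint : c * ∫ U, schurMat N lam ((U : Matrix (Fin N) (Fin N) ℂ) *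
      (V : Matrix (Fin N) (Fin N) ℂ) * star (U : Matrix (Fin N) (Fin N) ℂ) *
      (W : Matrix (Fin N) (Fin N) ℂ)) ∂m = b * schurMat N lam (W : Matrix (Fin N) (Fin N) ℂ) := by
    rw [← hb W inferInstance, hgV, ← integral_const_mul]
    exact integral_congr_ae (ae_of_all m fun U ↦ (hc _ (inferInstanceAs (IsStarNormal
      ((U * V * star U * W : Matrix.unitaryGroup (Fin N) ℂ) : Matrix (Fin N) (Fin N) ℂ)))).symm)
  rw [eq_div_iff (right_ne_zero_of_mul_eq_one hcd)]
  refine mul_left_cancel₀ (left_ne_zero_of_mul_eq_one hcd) ?_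
  linear_combination schur N lam (fun _ ↦ (1 : ℂ)) * hint +
    schurMat N lam (W : Matrix (Fin N) (Fin N) ℂ) * hbd
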